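/- arXiv:2303.03980 — 2 statements merged into one kernel-verified Lean document; each statement's English description precedes it below -/
import Mathlib

section
/- Let V be a rooted directed tree with root v0 and μ=(μ_v)_{v∈V} a weight of nonzero scalars. Then: (a) For every 1≤p≤∞ and every t>0, c_p(V,tμ)=t·c_p(V,μ) and r_p(V,tμ)=t·r_p(V,μ). (b) For every v∈Chi(v0): c_p(V,μ)≤(|μ_v|^p+c_p(V(v),μ)^p)^{1/p} and r_p(V,μ)≤(|μ_{v0}|^p+r_p(V(v),μ)^p)^{1/p} for 1≤p<∞, while c_∞(V,μ)≤max(|μ_v|,c_∞(V(v),μ)) and r_∞(V,μ)≤max(|μ_{v0}|,r_∞(V(v),μ)). (c) Suppose v0 is not a leaf, and suppose that either V has finite length or ∑_{v∈Chi(v0)}|μ_v|^{-p*}<∞ (with p*=1 in the case p=∞). Then for 1<p<∞: c_p(V,μ)=(∑_{v∈Chi(v0)}(|μ_v|^p+c_p(V(v),μ)^p)^{-p*/p})^{-1/p*} and r_p(V,μ)=(|μ_{v0}|^p+(∑_{v∈Chi(v0)}r_p(V(v),μ)^{-p*})^{-p/p*})^{1/p}; and for p=∞: c_∞(V,μ)=(∑_{v∈Chi(v0)}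 max(|μ_v|,c_∞(V(v),μ))^{-1})^{-1} and r_∞(V,μ)=max(|μ_{v0}|,(∑_{v∈Chi(v0)}r_∞(V(v),μ)^{-1})^{-1}). -/
/-!
Put `q = p*`, and let resistances combine as `ρ(a, b) = (a ^ p + b ^ p) ^ (1 / p)` in series
(`max a b` when `p = ∞`) and as `(∑ᵢ rᵢ ^ (-q)) ^ (-1 / q)` in parallel. Then `c_p(V(v))` is the
increasing limit of the truncations of `c(v) = parallel sum over the children u of ρ(μ_u, c(u))`.
Both laws are homogeneous, which gives (a), and a parallel sum is at most each of its terms, which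
gives (b). For (c), one passes to the limit in the recursion: the series law is continuous and
monotone, and the parallel law commutes with increasing limits as soon as `∑ᵢ rᵢ ^ (-q)` is finite
for the first term of the sequence, by monotone convergence from above. In a subtree of finite
length the truncations are eventually constant and there is no limit to take. For `p = 1`, a branch
starting from a child of `v` extends to one starting from `v`.
-/

open scoped ENNReal NNReal Topology Classical
open Filter

namespace PaperTree

/-! ### Directed trees -/

variable {V : Type*}

/-- Iterated parent map of a directed tree given by a parent function. -/
def parIter (par : V → Option V) : ℕ → V → Option V
  | 0, v => some v
  | n + 1, v => (par v).bind (parIter par n)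

/-- `par` is the parent function of a (countable, connected, acyclic) directed tree on `V`,
in which every vertex has at most one parent and at most one vertex (the root) has none. -/
structure IsDirectedTree (par : V → Option V) : Prop where
  countable : Countable V
  acyclic : ∀ (v : V) (n : ℕ), 0 < n → parIter par n v ≠ some v
  connected : ∀ u v : V, ∃ (m n : ℕ) (w : V), parIter par m u = some w ∧ parIter par n v = some w
  root_unique : ∀ u v : V, par u = none → par v = none → u = v

/-- The set of children of `v`. -/
def children (par : V → Option V) (v : V) : Set V := {u : V | par u = some v}

/-- The set of descendants of `v` (including `v`); the rooted subtree `V(v)`. -/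
def descendants (par : V → Option V) (v : V) : Set V := {u : V | ∃ n : ℕ, parIter par n u = some v}

def IsLeafV (par : V → Option V) (v : V) : Prop := children par v = ∅

def Leafless (par : V → Option V) : Prop := ∀ v : V, children par v ≠ ∅

def IsRoot (par : V → Option V) (v : V) : Prop := par v = none

def Rooted (par : V → Option V) : Prop := ∃ v : V, IsRoot par v

def Unrooted (par : V → Option V) : Prop := ∀ v : V, par v ≠ none

/-- The tree has a free left end: some vertex all of whose (proper) ancestors
have exactly one child. -/
def HasFreeLeftEnd (par : V → Option V) : Prop :=
  ∃ v : V, ∀ n : ℕ, 1 ≤ n → ∀ w : V, parIter par n v = some w → ∃! u : V, u ∈ children par w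

/-- The tree has finite length (all branches have uniformly bounded length). -/
def FiniteLength (par : V → Option V) : Prop := ∃ m : ℕ, ∀ u : V, parIter par (m + 1) u = none

/-- Product of the weights along the upward path of length `n` ending at `u`;
for `u ∈ Chi^n(v)` this is `λ(v → u)`, and `pathProd par lam n v = λ(par^n(v) → v)`. -/
def pathProd {𝕜 : Type*} [Monoid 𝕜] (par : V → Option V) (lam : V → 𝕜) : ℕ → V → 𝕜
  | 0, _ => 1
  | n + 1, u => lam u * ((par u).elim 1 (pathProd par lam n))

/-- A (finite or infinite, maximal) branch starting at `v`, encoded with `Option`. -/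
def IsOptBranch (par : V → Option V) (v : V) (b : ℕ → Option V) : Prop :=
  b 0 = some v ∧
  (∀ (k : ℕ) (w : V), b k = some w →
      (children par w = ∅ ∧ b (k + 1) = none) ∨ ∃ u ∈ children par w, b (k + 1) = some u) ∧
  ∀ k : ℕ, b k = none → b (k + 1) = none

/-- An infinite branch starting at `v` (adequate for leafless trees). -/
def IsBranch (par : V → Option V) (v : V) (b : ℕ → V) : Prop :=
  b 0 = v ∧ ∀ k : ℕ, b (k + 1) ∈ children par (b k)

/-- The `[0,∞]`-valued absolute weight associated with a scalar weight. -/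
noncomputable def nw {𝕜 : Type*} [RCLike 𝕜] (μ : V → 𝕜) : V → ℝ≥0∞ := fun v => (‖μ v‖₊ : ℝ≥0∞)

/-! ### The generalized continued fractions `c_p` and resistances `r_p` -/

section Constants

/-- Conjugate exponent. -/
noncomputable def conjExp (p : ℝ) : ℝ := p / (p - 1)

variable {V : Type*}

/-- `cpAux chi w p m v` is the continued fraction `c_p` of the subtree of descendants of `v`
(with respect to the children map `chi`) truncated at depth `m`, with weight `w`. -/
noncomputable def cpAux (chi : V → Set V) (w : V → ℝ≥0∞) (p : ℝ) : ℕ → V → ℝ≥0∞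
  | 0, _ => 0
  | m + 1, v =>
      if chi v = ∅ then 0
      else (∑' u : ↥(chi v),
              (w u.1 ^ p + cpAux chi w p m u.1 ^ p) ^ (-(conjExp p / p))) ^ (-(1 / conjExp p))

/-- The continued fraction `c_p(V(v), w)` of order `1 < p < ∞`. -/
noncomputable def cpC (chi : V → Set V) (w : V → ℝ≥0∞) (p : ℝ) (v : V) : ℝ≥0∞ :=
  ⨆ m : ℕ, cpAux chi w p m v

/-- The resistance `r_p(V(v), w)` of order `1 < p < ∞`. -/
noncomputable def rpC (chi : V → Set V) (w : V → ℝ≥0∞) (p : ℝ) (v : V) : ℝ≥0∞ :=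
  (w v ^ p + cpC chi w p v ^ p) ^ (1 / p)

/-- Truncated continued fraction of order `p = ∞`. -/
noncomputable def cInfAux (chi : V → Set V) (w : V → ℝ≥0∞) : ℕ → V → ℝ≥0∞
  | 0, _ => 0
  | m + 1, v =>
      if chi v = ∅ then 0
      else (∑' u : ↥(chi v), (max (w u.1) (cInfAux chi w m u.1))⁻¹)⁻¹

/-- The continued fraction `c_∞(V(v), w)`. -/
noncomputable def cInfC (chi : V → Set V) (w : V → ℝ≥0∞) (v : V) : ℝ≥0∞ :=
  ⨆ m : ℕ, cInfAux chi w m v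

/-- The resistance `r_∞(V(v), w)`. -/
noncomputable def rInfC (chi : V → Set V) (w : V → ℝ≥0∞) (v : V) : ℝ≥0∞ :=
  max (w v) (cInfC chi w v)

end Constants

/-! ### The constants `c_1` and `r_1` -/

section COne

variable {V : Type*}

/-- `∑_{n ≥ 1} w(v_n)` along an (optional) branch `(v_0, v_1, v_2, …)`. -/
noncomputable def branchTail (w : V → ℝ≥0∞) (b : ℕ → Option V) : ℝ≥0∞ :=
  ∑' n : ℕ, (b (n + 1)).elim 0 w

/-- `c_1(V(v), w)`: the infimum over all branches starting at `v` of `∑_{n ≥ 1} w(v_n)`. -/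
noncomputable def c1C (par : V → Option V) (w : V → ℝ≥0∞) (v : V) : ℝ≥0∞ :=
  ⨅ b ∈ {b : ℕ → Option V | IsOptBranch par v b}, branchTail w b

/-- `r_1(V(v), w)`. -/
noncomputable def r1C (par : V → Option V) (w : V → ℝ≥0∞) (v : V) : ℝ≥0∞ :=
  w v + c1C par w v

end COne

section SeriesParallel

/-- The series law of order `p`: the `ℓ^p`-sum of two resistances. -/
noncomputable def seriesSum (p : ℝ) (a b : ℝ≥0∞) : ℝ≥0∞ := (a ^ p + b ^ p) ^ (1 / p)

/-- The parallel law of order `q`: the resistance of a family of resistances in parallel. Since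
`0 ^ (-q) = ∞` and `∞ ^ (-q) = 0` for `q > 0`, resistances `0` and `∞` are allowed; the empty
family has resistance `∞`. -/
noncomputable def parallelSum {ι : Type*} (q : ℝ) (f : ι → ℝ≥0∞) : ℝ≥0∞ :=
  (∑' i, f i ^ (-q)) ^ (-(1 / q))

lemma antitone_rpow_of_nonpos {z : ℝ} (hz : z ≤ 0) : Antitone fun x : ℝ≥0∞ => x ^ z := by
  intro a b hab
  rw [← ENNReal.inv_le_inv, ← ENNReal.rpow_neg, ← ENNReal.rpow_neg]
  exact ENNReal.rpow_le_rpow hab (neg_nonneg.2 hz)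

lemma const_mul_rpow {t : ℝ≥0∞} (ht₀ : t ≠ 0) (ht : t ≠ ⊤) (x : ℝ≥0∞) (z : ℝ) :
    (t * x) ^ z = t ^ z * x ^ z := by
  simp [ENNReal.mul_rpow_eq_ite, ht₀, ht]

lemma tsum_iInf_of_antitone {ι : Type*} {f : ℕ → ι → ℝ≥0∞} (hf : Antitone f)
    (h0 : ∑' i, f 0 i ≠ ⊤) : ∑' i, ⨅ n, f n i = ⨅ n, ∑' i, f n i := by
  let _ : MeasurableSpace ι := ⊤
  simpa only [MeasureTheory.lintegral_count] using
    MeasureTheory.lintegral_iInf (μ := .count) (fun _ => measurable_from_top) hf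
      (by rwa [MeasureTheory.lintegral_count])

lemma seriesSum_mono_right {p : ℝ} (hp : 0 ≤ p) (a : ℝ≥0∞) : Monotone (seriesSum p a) :=
  fun _ _ hbc => ENNReal.rpow_le_rpow
    (add_le_add_right (ENNReal.rpow_le_rpow hbc hp) _) (one_div_nonneg.2 hp)

lemma continuous_seriesSum_right (p : ℝ) (a : ℝ≥0∞) : Continuous (seriesSum p a) :=
  ENNReal.continuous_rpow_const.comp (continuous_const.add ENNReal.continuous_rpow_const)

lemma seriesSum_zero_right {p : ℝ} (hp : 0 < p) (a : ℝ≥0∞) : seriesSum p a 0 = a := by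
  rw [seriesSum, ENNReal.zero_rpow_of_pos hp, add_zero, one_div, ENNReal.rpow_rpow_inv hp.ne']

lemma seriesSum_mul_mul_left {p : ℝ} (hp : 0 < p) (t a b : ℝ≥0∞) :
    seriesSum p (t * a) (t * b) = t * seriesSum p a b := by
  simp only [seriesSum, ENNReal.mul_rpow_of_nonneg _ _ hp.le, ← mul_add,
    ENNReal.mul_rpow_of_nonneg _ _ (one_div_nonneg.2 hp.le)]
  rw [one_div, ENNReal.rpow_rpow_inv hp.ne']

lemma seriesSum_rpow_neg (p q : ℝ) (a b : ℝ≥0∞) :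
    seriesSum p a b ^ (-q) = (a ^ p + b ^ p) ^ (-(q / p)) := by
  rw [seriesSum, ← ENNReal.rpow_mul]
  ring_nf

variable {ι : Type*} {q : ℝ}

lemma parallelSum_one (f : ι → ℝ≥0∞) : parallelSum 1 f = (∑' i, (f i)⁻¹)⁻¹ := by
  simp only [parallelSum, div_one, ENNReal.rpow_neg_one]

lemma parallelSum_rpow (p q : ℝ) (f : ι → ℝ≥0∞) :
    parallelSum q f ^ p = (∑' i, f i ^ (-q)) ^ (-(p / q)) := by
  rw [parallelSum, ← ENNReal.rpow_mul]
  ring_nf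

lemma parallelSum_mono (hq : 0 ≤ q) : Monotone (parallelSum q : (ι → ℝ≥0∞) → ℝ≥0∞) :=
  fun _ _ hfg => antitone_rpow_of_nonpos (neg_nonpos.2 (one_div_nonneg.2 hq))
    (ENNReal.tsum_le_tsum fun i => antitone_rpow_of_nonpos (neg_nonpos.2 hq) (hfg i))

lemma parallelSum_le (hq : 0 < q) (f : ι → ℝ≥0∞) (i : ι) : parallelSum q f ≤ f i :=
  calc parallelSum q f ≤ (f i ^ (-q)) ^ (-(1 / q)) :=
        antitone_rpow_of_nonpos (neg_nonpos.2 (one_div_nonneg.2 hq.le)) (ENNReal.le_tsum i)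
    _ = f i := by
        rw [← ENNReal.rpow_mul, neg_mul_neg, mul_one_div_cancel hq.ne', ENNReal.rpow_one]

lemma parallelSum_const_mul (hq : q ≠ 0) {t : ℝ≥0∞} (ht₀ : t ≠ 0) (ht : t ≠ ⊤) (f : ι → ℝ≥0∞) :
    parallelSum q (fun i => t * f i) = t * parallelSum q f := by
  have ht_rpow₀ : t ^ (-q) ≠ 0 := by simp [ENNReal.rpow_eq_zero_iff, ht₀, ht]
  have ht_rpow : t ^ (-q) ≠ ⊤ := ENNReal.rpow_ne_top_of_ne_zero ht₀ ht
  simp only [parallelSum, const_mul_rpow ht₀ ht, ENNReal.tsum_mul_left,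
    const_mul_rpow ht_rpow₀ ht_rpow]
  rw [← ENNReal.rpow_mul, neg_mul_neg, mul_one_div_cancel hq, ENNReal.rpow_one]

lemma parallelSum_iSup (hq : 0 < q) {f : ℕ → ι → ℝ≥0∞} (hf : Monotone f)
    (h0 : ∑' i, f 0 i ^ (-q) ≠ ⊤) :
    parallelSum q (fun i => ⨆ n, f n i) = ⨆ n, parallelSum q (f n) := by
  have h_anti := antitone_rpow_of_nonpos (neg_nonpos.2 hq.le)
  have h_anti' := antitone_rpow_of_nonpos (neg_nonpos.2 (one_div_nonneg.2 hq.le))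
  calc parallelSum q (fun i => ⨆ n, f n i)
      = (∑' i, ⨅ n, f n i ^ (-q)) ^ (-(1 / q)) := by
        refine congrArg (· ^ (-(1 / q))) (tsum_congr fun i => ?_)
        exact h_anti.map_ciSup_of_continuousAt ENNReal.continuous_rpow_const.continuousAt
    _ = (⨅ n, ∑' i, f n i ^ (-q)) ^ (-(1 / q)) := by
        rw [tsum_iInf_of_antitone (fun m n hmn i => h_anti (hf hmn i)) h0]
    _ = ⨆ n, parallelSum q (f n) :=
        h_anti'.map_ciInf_of_continuousAt ENNReal.continuous_rpow_const.continuousAt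

end SeriesParallel

section Generation

/-- The `n`-th generation `Chi^n(v)` of descendants of `v`; that it is empty for some `n` says that
the subtree `V(v)` has finite length. -/
def generation (chi : V → Set V) : ℕ → V → Set V
  | 0, v => {v}
  | n + 1, v => ⋃ u ∈ chi v, generation chi n u

lemma generation_succ_eq_empty {chi : V → Set V} {n : ℕ} {v : V} :
    generation chi (n + 1) v = ∅ ↔ ∀ u ∈ chi v, generation chi n u = ∅ := by
  simp only [generation, Set.iUnion_eq_empty]

lemma parIter_succ_eq_bind_par (par : V → Option V) (n : ℕ) (u : V) :
    parIter par (n + 1) u = (parIter par n u).bind par := by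
  induction n generalizing u with
  | zero => simp [parIter]
  | succ n ih =>
    change (par u).bind (parIter par (n + 1)) = ((par u).bind (parIter par n)).bind par
    rw [Option.bind_assoc]
    exact congrArg _ (funext ih)

lemma mem_generation_children {par : V → Option V} {n : ℕ} {u v : V} :
    u ∈ generation (children par) n v ↔ parIter par n u = some v := by
  induction n generalizing v with
  | zero => simp [generation, parIter]
  | succ n ih =>
    simp only [generation, Set.mem_iUnion, ih, parIter_succ_eq_bind_par, Option.bind_eq_some_iff,
      children, Set.mem_ofPred_eq, exists_prop, and_comm]

lemma FiniteLength.exists_generation_eq_empty {par : V → Option V} (h : FiniteLength par) (v : V) :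
    ∃ n, generation (children par) n v = ∅ := by
  obtain ⟨m, hm⟩ := h
  refine ⟨m + 1, Set.eq_empty_of_forall_notMem fun u hu => ?_⟩
  simp [mem_generation_children, hm u] at hu

end Generation

section Fraction

/-- The continued fraction at `v` truncated at depth `m`, for an arbitrary series law: `r u x` is
the resistance of the edge into `u` in series with a resistance `x`. As for `cpAux`, a leaf has
value `0`, not the value `∞` of the empty parallel sum. -/
noncomputable def truncFraction (chi : V → Set V) (r : V → ℝ≥0∞ → ℝ≥0∞) (q : ℝ) : ℕ → V → ℝ≥0∞
  | 0, _ => 0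
  | m + 1, v =>
      if chi v = ∅ then 0
      else parallelSum q fun u : ↥(chi v) => r u.1 (truncFraction chi r q m u.1)

/-- The continued fraction of the subtree `V(v)`, common to all orders `1 < p ≤ ∞`. -/
noncomputable def fraction (chi : V → Set V) (r : V → ℝ≥0∞ → ℝ≥0∞) (q : ℝ) (v : V) : ℝ≥0∞ :=
  ⨆ m, truncFraction chi r q m v

variable {chi : V → Set V} {r : V → ℝ≥0∞ → ℝ≥0∞} {q : ℝ}

lemma truncFraction_succ {v : V} (hv : chi v ≠ ∅) (m : ℕ) :
    truncFraction chi r q (m + 1) v =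
      parallelSum q fun u : ↥(chi v) => r u.1 (truncFraction chi r q m u.1) :=
  if_neg hv

lemma monotone_truncFraction (hr : ∀ v, Monotone (r v)) (hq : 0 ≤ q) :
    Monotone (truncFraction chi r q) := by
  refine monotone_nat_of_le_succ fun m => ?_
  induction m with
  | zero => exact fun _ => zero_le
  | succ m ih =>
    intro v
    rw [truncFraction, truncFraction]
    split_ifs with hv
    · exact le_rfl
    · exact parallelSum_mono hq fun u => hr u (ih u)

lemma truncFraction_eq_of_generation_eq_empty {m n : ℕ} (hmn : m ≤ n) {v : V}
    (hv : generation chi m v = ∅) : truncFraction chi r q n v = truncFraction chi r q m v := by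
  induction m generalizing n v with
  | zero => exact absurd hv (Set.singleton_ne_empty v)
  | succ m ih =>
    obtain ⟨n, rfl⟩ := Nat.exists_eq_add_one_of_ne_zero (Nat.ne_zero_of_lt hmn)
    have h_child (u : ↥(chi v)) : truncFraction chi r q n u = truncFraction chi r q m u :=
      ih (Nat.le_of_succ_le_succ hmn) (generation_succ_eq_empty.1 hv u u.2)
    simp only [truncFraction, h_child]

lemma fraction_eq_truncFraction (hr : ∀ v, Monotone (r v)) (hq : 0 ≤ q) {n : ℕ} {v : V}
    (hv : generation chi n v = ∅) : fraction chi r q v = truncFraction chi r q n v := by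
  refine le_antisymm (iSup_le fun m => ?_) (le_iSup (fun m => truncFraction chi r q m v) n)
  rcases le_total n m with hnm | hmn
  · exact (truncFraction_eq_of_generation_eq_empty hnm hv).le
  · exact monotone_truncFraction hr hq hmn v

lemma fraction_eq_parallelSum_of_generation_eq_empty (hr : ∀ v, Monotone (r v)) (hq : 0 ≤ q)
    {n : ℕ} {v : V} (hv : chi v ≠ ∅) (hn : generation chi n v = ∅) :
    fraction chi r q v = parallelSum q fun u : ↥(chi v) => r u.1 (fraction chi r q u.1) := by
  cases n with
  | zero => exact absurd hn (Set.singleton_ne_empty v)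
  | succ n =>
    have h_child (u : ↥(chi v)) : fraction chi r q u = truncFraction chi r q n u :=
      fraction_eq_truncFraction hr hq (generation_succ_eq_empty.1 hn u u.2)
    simp only [fraction_eq_truncFraction hr hq hn, h_child, truncFraction_succ hv]

lemma fraction_eq_parallelSum_of_tsum_lt_top (hr : ∀ v, Monotone (r v))
    (hr_cont : ∀ v, Continuous (r v)) (hq : 0 < q) {v : V} (hv : chi v ≠ ∅)
    (h_sum : ∑' u : ↥(chi v), r u.1 0 ^ (-q) < ⊤) :
    fraction chi r q v = parallelSum q fun u : ↥(chi v) => r u.1 (fraction chi r q u.1) := by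
  have h_mono := monotone_truncFraction (chi := chi) hr hq.le
  calc fraction chi r q v = ⨆ m, truncFraction chi r q (m + 1) v :=
        (Monotone.iSup_nat_add (fun _ _ hmn => h_mono hmn v) 1).symm
    _ = ⨆ m, parallelSum q fun u : ↥(chi v) => r u.1 (truncFraction chi r q m u.1) := by
        simp only [truncFraction_succ hv]
    _ = parallelSum q fun u : ↥(chi v) => ⨆ m, r u.1 (truncFraction chi r q m u.1) :=
        (parallelSum_iSup hq (f := fun m (u : ↥(chi v)) => r u.1 (truncFraction chi r q m u.1))
          (fun _ _ hmn u => hr u.1 (h_mono hmn u.1)) h_sum.ne).symm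
    _ = parallelSum q fun u : ↥(chi v) => r u.1 (fraction chi r q u.1) := by
        refine congrArg (parallelSum q) (funext fun u => ?_)
        exact ((hr u).map_ciSup_of_continuousAt (hr_cont u).continuousAt).symm

lemma fraction_eq_parallelSum (hr : ∀ v, Monotone (r v)) (hr_cont : ∀ v, Continuous (r v))
    (hq : 0 < q) {v : V} (hv : chi v ≠ ∅)
    (h : (∃ n, generation chi n v = ∅) ∨ ∑' u : ↥(chi v), r u.1 0 ^ (-q) < ⊤) :
    fraction chi r q v = parallelSum q fun u : ↥(chi v) => r u.1 (fraction chi r q u.1) := by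
  rcases h with ⟨n, hn⟩ | h_sum
  · exact fraction_eq_parallelSum_of_generation_eq_empty hr hq.le hv hn
  · exact fraction_eq_parallelSum_of_tsum_lt_top hr hr_cont hq hv h_sum

lemma fraction_le (hr : ∀ v, Monotone (r v)) (hq : 0 < q) {u v : V} (hu : u ∈ chi v) :
    fraction chi r q v ≤ r u (fraction chi r q u) := by
  refine iSup_le fun m => ?_
  cases m with
  | zero => exact zero_le
  | succ m =>
    rw [truncFraction_succ (Set.nonempty_iff_ne_empty.1 ⟨u, hu⟩)]
    calc parallelSum q (fun u : ↥(chi v) => r u.1 (truncFraction chi r q m u.1))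
        ≤ r u (truncFraction chi r q m u) := parallelSum_le hq _ (⟨u, hu⟩ : ↥(chi v))
      _ ≤ r u (fraction chi r q u) := hr u (le_iSup (fun m => truncFraction chi r q m u) m)

lemma fraction_const_mul {r' : V → ℝ≥0∞ → ℝ≥0∞} {t : ℝ≥0∞} (ht₀ : t ≠ 0) (ht : t ≠ ⊤)
    (hr : ∀ v x, r' v (t * x) = t * r v x) (hq : q ≠ 0) (v : V) :
    fraction chi r' q v = t * fraction chi r q v := by
  have h_trunc (m : ℕ) (v : V) : truncFraction chi r' q m v = t * truncFraction chi r q m v := by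
    induction m generalizing v with
    | zero => simp only [truncFraction, mul_zero]
    | succ m ih =>
      simp only [truncFraction, ih, hr, parallelSum_const_mul hq ht₀ ht, mul_ite, mul_zero]
  simp only [fraction, h_trunc, ENNReal.mul_iSup]

end Fraction

section FiniteOrder

variable {p : ℝ}

lemma conjExp_pos (hp : 1 < p) : 0 < conjExp p := div_pos (by linarith) (by linarith)

lemma rpC_eq_seriesSum (chi : V → Set V) (w : V → ℝ≥0∞) (p : ℝ) (v : V) :
    rpC chi w p v = seriesSum p (w v) (cpC chi w p v) := rfl

lemma cpC_eq_fraction (chi : V → Set V) (w : V → ℝ≥0∞) (p : ℝ) (v : V) :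
    cpC chi w p v = fraction chi (fun u => seriesSum p (w u)) (conjExp p) v := by
  have h_trunc (m : ℕ) (v : V) : cpAux chi w p m v =
      truncFraction chi (fun u => seriesSum p (w u)) (conjExp p) m v := by
    induction m generalizing v with
    | zero => rfl
    | succ m ih => simp only [cpAux, truncFraction, parallelSum, seriesSum_rpow_neg, ih]
  simp only [cpC, fraction, h_trunc]

lemma cpC_const_mul (hp : 1 < p) {t : ℝ≥0∞} (ht₀ : t ≠ 0) (ht : t ≠ ⊤) (chi : V → Set V)
    (w : V → ℝ≥0∞) (v : V) : cpC chi (fun u => t * w u) p v = t * cpC chi w p v := by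
  simp only [cpC_eq_fraction]
  exact fraction_const_mul ht₀ ht (fun u => seriesSum_mul_mul_left (one_pos.trans hp) t (w u))
    (conjExp_pos hp).ne' v

lemma rpC_const_mul (hp : 1 < p) {t : ℝ≥0∞} (ht₀ : t ≠ 0) (ht : t ≠ ⊤) (chi : V → Set V)
    (w : V → ℝ≥0∞) (v : V) : rpC chi (fun u => t * w u) p v = t * rpC chi w p v := by
  simp only [rpC_eq_seriesSum, cpC_const_mul hp ht₀ ht, seriesSum_mul_mul_left (one_pos.trans hp)]

lemma cpC_le_rpC (hp : 1 < p) {chi : V → Set V} (w : V → ℝ≥0∞) {u v : V} (hu : u ∈ chi v) :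
    cpC chi w p v ≤ rpC chi w p u := by
  simp only [rpC_eq_seriesSum, cpC_eq_fraction]
  exact fraction_le (fun u => seriesSum_mono_right (zero_le_one.trans hp.le) (w u))
    (conjExp_pos hp) hu

lemma cpC_eq_parallelSum (hp : 1 < p) {chi : V → Set V} {w : V → ℝ≥0∞} {v : V} (hv : chi v ≠ ∅)
    (h : (∃ n, generation chi n v = ∅) ∨ ∑' u : ↥(chi v), w u.1 ^ (-conjExp p) < ⊤) :
    cpC chi w p v = parallelSum (conjExp p) fun u : ↥(chi v) => rpC chi w p u.1 := by
  have hp₀ : 0 < p := one_pos.trans hp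
  simp only [rpC_eq_seriesSum, cpC_eq_fraction]
  refine fraction_eq_parallelSum (fun u => seriesSum_mono_right hp₀.le (w u))
    (fun u => continuous_seriesSum_right p (w u)) (conjExp_pos hp) hv ?_
  simpa only [seriesSum_zero_right hp₀] using h

end FiniteOrder

section OrderInfinity

lemma cInfC_eq_fraction (chi : V → Set V) (w : V → ℝ≥0∞) (v : V) :
    cInfC chi w v = fraction chi (fun u => max (w u)) 1 v := by
  have h_trunc (m : ℕ) (v : V) :
      cInfAux chi w m v = truncFraction chi (fun u => max (w u)) 1 m v := by
    induction m generalizing v with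
    | zero => rfl
    | succ m ih => simp only [cInfAux, truncFraction, parallelSum_one, ih]
  simp only [cInfC, fraction, h_trunc]

lemma cInfC_const_mul {t : ℝ≥0∞} (ht₀ : t ≠ 0) (ht : t ≠ ⊤) (chi : V → Set V) (w : V → ℝ≥0∞)
    (v : V) : cInfC chi (fun u => t * w u) v = t * cInfC chi w v := by
  simp only [cInfC_eq_fraction]
  exact fraction_const_mul ht₀ ht (fun u x => max_mul_mul_left t (w u) x) one_ne_zero v

lemma rInfC_const_mul {t : ℝ≥0∞} (ht₀ : t ≠ 0) (ht : t ≠ ⊤) (chi : V → Set V) (w : V → ℝ≥0∞)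
    (v : V) : rInfC chi (fun u => t * w u) v = t * rInfC chi w v := by
  rw [rInfC, cInfC_const_mul ht₀ ht, max_mul_mul_left, rInfC]

lemma cInfC_le_rInfC {chi : V → Set V} (w : V → ℝ≥0∞) {u v : V} (hu : u ∈ chi v) :
    cInfC chi w v ≤ rInfC chi w u := by
  simp only [rInfC, cInfC_eq_fraction]
  exact fraction_le (fun u _ _ hxy => max_le_max_left (w u) hxy) one_pos hu

lemma cInfC_eq_inv_tsum_inv {chi : V → Set V} {w : V → ℝ≥0∞} {v : V} (hv : chi v ≠ ∅)
    (h : (∃ n, generation chi n v = ∅) ∨ ∑' u : ↥(chi v), (w u.1)⁻¹ < ⊤) :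
    cInfC chi w v = (∑' u : ↥(chi v), (rInfC chi w u.1)⁻¹)⁻¹ := by
  simp only [rInfC, cInfC_eq_fraction]
  rw [← parallelSum_one]
  refine fraction_eq_parallelSum (fun u _ _ hxy => max_le_max_left (w u) hxy)
    (fun u => continuous_const.max continuous_id) one_pos hv ?_
  simpa only [zero_le, max_eq_left, ENNReal.rpow_neg_one] using h

end OrderInfinity

section OrderOne

/-- The sequence `(v, b 0, b 1, …)`: the branch `b` lengthened by `v` at its start. -/
def consBranch (v : V) (b : ℕ → Option V) : ℕ → Option V
  | 0 => some v
  | n + 1 => b n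

lemma IsOptBranch.consBranch {par : V → Option V} {u v : V} {b : ℕ → Option V}
    (hb : IsOptBranch par u b) (hu : u ∈ children par v) :
    IsOptBranch par v (consBranch v b) := by
  obtain ⟨h_start, h_step, h_stop⟩ := hb
  refine ⟨rfl, ?_, ?_⟩
  · rintro (_ | k) w hw
    · obtain rfl : v = w := Option.some.inj hw
      exact Or.inr ⟨u, hu, h_start⟩
    · exact h_step k w hw
  · rintro (_ | k) hk
    · exact absurd hk (Option.some_ne_none v)
    · exact h_stop k hk

lemma branchTail_consBranch (w : V → ℝ≥0∞) (v : V) (b : ℕ → Option V) :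
    branchTail w (consBranch v b) = (b 0).elim 0 w + branchTail w b :=
  tsum_eq_zero_add' ENNReal.summable

lemma branchTail_const_mul (t : ℝ≥0∞) (w : V → ℝ≥0∞) (b : ℕ → Option V) :
    branchTail (fun u => t * w u) b = t * branchTail w b := by
  rw [branchTail, branchTail, ← ENNReal.tsum_mul_left]
  congr! with n
  cases b (n + 1) <;> simp

lemma c1C_const_mul {t : ℝ≥0∞} (ht₀ : t ≠ 0) (ht : t ≠ ⊤) (par : V → Option V) (w : V → ℝ≥0∞)
    (v : V) : c1C par (fun u => t * w u) v = t * c1C par w v := by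
  simp only [c1C, branchTail_const_mul, ENNReal.mul_iInf_of_ne ht₀ ht]

lemma r1C_const_mul {t : ℝ≥0∞} (ht₀ : t ≠ 0) (ht : t ≠ ⊤) (par : V → Option V) (w : V → ℝ≥0∞)
    (v : V) : r1C par (fun u => t * w u) v = t * r1C par w v := by
  rw [r1C, c1C_const_mul ht₀ ht, ← mul_add, r1C]

lemma c1C_le_r1C {par : V → Option V} (w : V → ℝ≥0∞) {u v : V} (hu : u ∈ children par v) :
    c1C par w v ≤ r1C par w u := by
  simp only [r1C, c1C, ENNReal.add_iInf]
  refine le_iInf₂ fun b hb => ?_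
  calc ⨅ b ∈ {b | IsOptBranch par v b}, branchTail w b
      ≤ branchTail w (consBranch v b) := iInf₂_le _ (hb.consBranch hu)
    _ = w u + branchTail w b := by rw [branchTail_consBranch, hb.1, Option.elim_some]

end OrderOne

lemma nw_ofReal_mul {𝕜 : Type*} [RCLike 𝕜] (μ : V → 𝕜) {t : ℝ} (ht : 0 ≤ t) :
    (nw fun v => (t : 𝕜) * μ v) = fun v => ENNReal.ofReal t * nw μ v := by
  funext v
  simp only [nw, nnnorm_mul, ENNReal.coe_mul]
  rw [← enorm_eq_nnnorm, ← ofReal_norm, RCLike.norm_of_nonneg ht]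

theorem statement4_general (par : V → Option V) (v : V) (w : V → ℝ≥0∞) :
    (∀ t : ℝ≥0∞, t ≠ 0 → t ≠ ⊤ →
      (∀ p : ℝ, 1 < p →
        cpC (children par) (fun u => t * w u) p v = t * cpC (children par) w p v ∧
        rpC (children par) (fun u => t * w u) p v = t * rpC (children par) w p v) ∧
      (c1C par (fun u => t * w u) v = t * c1C par w v ∧
        r1C par (fun u => t * w u) v = t * r1C par w v) ∧
      (cInfC (children par) (fun u => t * w u) v = t * cInfC (children par) w v ∧
        rInfC (children par) (fun u => t * w u) v = t * rInfC (children par) w v)) ∧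
    (∀ u ∈ children par v,
      (∀ p : ℝ, 1 < p →
        cpC (children par) w p v ≤ (w u ^ p + cpC (children par) w p u ^ p) ^ (1 / p) ∧
        rpC (children par) w p v ≤ (w v ^ p + rpC (children par) w p u ^ p) ^ (1 / p)) ∧
      (c1C par w v ≤ w u + c1C par w u ∧ r1C par w v ≤ w v + r1C par w u) ∧
      (cInfC (children par) w v ≤ max (w u) (cInfC (children par) w u) ∧
        rInfC (children par) w v ≤ max (w v) (rInfC (children par) w u))) ∧
    (children par v ≠ ∅ →
      (∀ p : ℝ, 1 < p →
        ((∃ n, generation (children par) n v = ∅) ∨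
          ∑' u : ↥(children par v), w u.1 ^ (-(conjExp p)) < ⊤) →
        cpC (children par) w p v =
          (∑' u : ↥(children par v),
            (w u.1 ^ p + cpC (children par) w p u.1 ^ p) ^ (-(conjExp p / p)))
              ^ (-(1 / conjExp p)) ∧
        rpC (children par) w p v =
          (w v ^ p +
            (∑' u : ↥(children par v), rpC (children par) w p u.1 ^ (-(conjExp p)))
              ^ (-(p / conjExp p))) ^ (1 / p)) ∧
      (((∃ n, generation (children par) n v = ∅) ∨ ∑' u : ↥(children par v), (w u.1)⁻¹ < ⊤) →
        cInfC (children par) w v =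
          (∑' u : ↥(children par v), (max (w u.1) (cInfC (children par) w u.1))⁻¹)⁻¹ ∧
        rInfC (children par) w v =
          max (w v) (∑' u : ↥(children par v), (rInfC (children par) w u.1)⁻¹)⁻¹)) := by
  refine ⟨fun t ht₀ ht => ?_, fun u hu => ?_, fun hv => ⟨fun p hp h => ?_, fun h => ?_⟩⟩
  · exact ⟨fun p hp => ⟨cpC_const_mul hp ht₀ ht _ w v, rpC_const_mul hp ht₀ ht _ w v⟩,
      ⟨c1C_const_mul ht₀ ht par w v, r1C_const_mul ht₀ ht par w v⟩,
      cInfC_const_mul ht₀ ht _ w v, rInfC_const_mul ht₀ ht _ w v⟩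
  · exact ⟨fun p hp => ⟨cpC_le_rpC hp w hu,
        seriesSum_mono_right (zero_le_one.trans hp.le) (w v) (cpC_le_rpC hp w hu)⟩,
      ⟨c1C_le_r1C w hu, add_le_add_right (c1C_le_r1C w hu) (w v)⟩,
      cInfC_le_rInfC w hu, max_le_max_left (w v) (cInfC_le_rInfC w hu)⟩
  · have h_rec := cpC_eq_parallelSum hp hv h
    constructor
    · simpa only [parallelSum, rpC_eq_seriesSum, seriesSum_rpow_neg] using h_rec
    · rw [rpC, h_rec, parallelSum_rpow]
  · have h_rec := cInfC_eq_inv_tsum_inv hv h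
    exact ⟨h_rec, congrArg (max (w v)) h_rec⟩

/-- Theorem 5.3 / `t-rec1`: positive homogeneity, subtree inequalities,
and recursive identities for the constants `c_p` and `r_p`, `1 ≤ p ≤ ∞`. -/
theorem statement4
    {𝕜 : Type*} [RCLike 𝕜] {V : Type*} (par : V → Option V) (hTree : IsDirectedTree par)
    (root : V) (hroot : IsRoot par root) (μ : V → 𝕜) (hμ : ∀ v : V, μ v ≠ 0) :
    -- (a) positive homogeneity in the weight, for all `1 ≤ p ≤ ∞`
    (∀ t : ℝ, 0 < t →
      (∀ p : ℝ, 1 < p →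
        cpC (children par) (nw fun v => (t : 𝕜) * μ v) p root
            = ENNReal.ofReal t * cpC (children par) (nw μ) p root ∧
        rpC (children par) (nw fun v => (t : 𝕜) * μ v) p root
            = ENNReal.ofReal t * rpC (children par) (nw μ) p root) ∧
      (c1C par (nw fun v => (t : 𝕜) * μ v) root = ENNReal.ofReal t * c1C par (nw μ) root ∧
        r1C par (nw fun v => (t : 𝕜) * μ v) root = ENNReal.ofReal t * r1C par (nw μ) root) ∧
      (cInfC (children par) (nw fun v => (t : 𝕜) * μ v) root
          = ENNReal.ofReal t * cInfC (children par) (nw μ) root ∧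
        rInfC (children par) (nw fun v => (t : 𝕜) * μ v) root
          = ENNReal.ofReal t * rInfC (children par) (nw μ) root)) ∧
    -- (b) subtree inequalities, for every child `v` of the root
    (∀ v ∈ children par root,
      (∀ p : ℝ, 1 < p →
        cpC (children par) (nw μ) p root
            ≤ (nw μ v ^ p + cpC (children par) (nw μ) p v ^ p) ^ (1 / p) ∧
        rpC (children par) (nw μ) p root
            ≤ (nw μ root ^ p + rpC (children par) (nw μ) p v ^ p) ^ (1 / p)) ∧
      (c1C par (nw μ) root ≤ nw μ v + c1C par (nw μ) v ∧
        r1C par (nw μ) root ≤ nw μ root + r1C par (nw μ) v) ∧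
      (cInfC (children par) (nw μ) root ≤ max (nw μ v) (cInfC (children par) (nw μ) v) ∧
        rInfC (children par) (nw μ) root ≤ max (nw μ root) (rInfC (children par) (nw μ) v))) ∧
    -- (c) recursive identities when the root is not a leaf
    (children par root ≠ ∅ →
      (∀ p : ℝ, 1 < p →
        (FiniteLength par ∨
            (∑' v : ↥(children par root), nw μ v.1 ^ (-(conjExp p))) < ⊤) →
        cpC (children par) (nw μ) p root
            = (∑' v : ↥(children par root),
                (nw μ v.1 ^ p + cpC (children par) (nw μ) p v.1 ^ p) ^ (-(conjExp p / p)))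
              ^ (-(1 / conjExp p)) ∧
        rpC (children par) (nw μ) p root
            = (nw μ root ^ p +
                (∑' v : ↥(children par root),
                  rpC (children par) (nw μ) p v.1 ^ (-(conjExp p))) ^ (-(p / conjExp p)))
              ^ (1 / p)) ∧
      ((FiniteLength par ∨ (∑' v : ↥(children par root), (nw μ v.1)⁻¹) < ⊤) →
        cInfC (children par) (nw μ) root
            = (∑' v : ↥(children par root),
                (max (nw μ v.1) (cInfC (children par) (nw μ) v.1))⁻¹)⁻¹ ∧
        rInfC (children par) (nw μ) root
            = max (nw μ root)
                (∑' v : ↥(children par root), (rInfC (children par) (nw μ) v.1)⁻¹)⁻¹)) := by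
  obtain ⟨h_mul, h_le, h_rec⟩ := statement4_general par root (nw μ)
  have h_len := fun h : FiniteLength par => h.exists_generation_eq_empty root
  refine ⟨fun t ht => ?_, h_le, fun hne => ⟨fun p hp h => (h_rec hne).1 p hp (h.imp_left h_len),
    fun h => (h_rec hne).2 (h.imp_left h_len)⟩⟩
  rw [nw_ofReal_mul μ ht.le]
  exact h_mul _ (ENNReal.ofReal_pos.2 ht).ne' ENNReal.ofReal_ne_top

end PaperTree
end

section
/- Let V be a rooted directed tree with root v0 and μ=(μ_v)_{v∈V} a weight of nonzero scalars. Let 1<p<∞ with conjugate exponent p*, and suppose ∑_{u∈Chi(v)}|μ_u|^{-p*}<∞ for all v∈V (i.e., the unweighted backward shift B is defined on ℓ^p(V,μ)). Let 𝒥 be the set of all backward invariant sequences f on V with f(v0)=1. Then: (a) inf_{f∈𝒥}(∑_{v∈V}|f(v)μ_v|^p)^{1/p} = r_p(V,μ) and inf_{f∈𝒥}(∑_{v∈V,v≠v0}|f(v)μ_v|^p)^{1/p} = c_p(V,μ). (b) If r_p(V,μ)<∞ (equivalently c_p(V,μ)<∞), then there exists a unique backward invariant sequence f∈ℓ^p(V,μ)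 with f(v0)=1 attaining these infima; it is given, for v=v_n∈gen_n with path (v0,v1,…,v_n) from v0 to v_n, by f(v)=∏_{k=1}^n [r_p(V(v_k),μ)^{-p*} / ∑_{u∈Chi(par(v_k))} r_p(V(u),μ)^{-p*}] > 0 if r_p(V(v),μ)<∞, and f(v)=0 if r_p(V(v),μ)=∞. -/
open scoped ENNReal NNReal Topology Classical
open Filter

namespace PaperTree

/-! ### Directed trees -/

variable {V : Type*}

/-! ### Fixed points over subtrees and backward invariant sequences -/

section Invariance

variable {𝕜 : Type*} [RCLike 𝕜] {V : Type*}

/-- The restriction of `g` to the subtree `W` is a fixed point of the weighted backward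
shift over `W`: `g w = ∑_{u ∈ Chi(w) ∩ W} λ_u g u` (unconditionally) for every `w ∈ W`. -/
def FixedPtOver (par : V → Option V) (lam : V → 𝕜) (g : V → 𝕜) (W : Set V) : Prop :=
  ∀ w ∈ W, HasSum (fun u : ↥(children par w ∩ W) => lam u.1 * g u.1) (g w)

/-- `g` is backward invariant with respect to the children map `chi`:
`g v = ∑_{u ∈ chi v} g u` (unconditionally) for every non-leaf `v`. -/
def BackwardInv (chi : V → Set V) (g : V → 𝕜) : Prop :=
  ∀ v : V, chi v ≠ ∅ → HasSum (fun u : ↥(chi v) => g u.1) (g v)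

/-- Backward invariance over a subtree `W` (with respect to the children map `chi`). -/
def BackwardInvOn (chi : V → Set V) (W : Set V) (g : V → 𝕜) : Prop :=
  ∀ w ∈ W, (chi w ∩ W).Nonempty → HasSum (fun u : ↥(chi w ∩ W) => g u.1) (g w)

/-- A scalar that is a (strictly) positive real. -/
def IsPosScalar {𝕜 : Type*} [RCLike 𝕜] (c : 𝕜) : Prop := ∃ r : ℝ, 0 < r ∧ c = (r : 𝕜)

end Invariance

/-! ### Weighted `ℓ^p`- and sup-norms on subsets of vertices -/

section Norms

variable {𝕜 : Type*} [RCLike 𝕜] {V : Type*}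

/-- `(∑_{v ∈ S} (|g v| w v)^p)^{1/p}` in `[0,∞]`. -/
noncomputable def lpSumOn (w : V → ℝ≥0∞) (p : ℝ) (S : Set V) (g : V → 𝕜) : ℝ≥0∞ :=
  (∑' v : ↥S, ((‖g v.1‖₊ : ℝ≥0∞) * w v.1) ^ p) ^ (1 / p)

/-- `sup_{v ∈ S} |g v| w v` in `[0,∞]`. -/
noncomputable def supNormOn (w : V → ℝ≥0∞) (S : Set V) (g : V → 𝕜) : ℝ≥0∞ :=
  ⨆ v : ↥S, (‖g v.1‖₊ : ℝ≥0∞) * w v.1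

end Norms

/-!
The tree is an electrical network: the vertex `v` is a resistor `|μ_v|` in series with the parallel
connection of the subtrees of its children, so that `r_p(V(v))` is the resistance of the subtree of
`v` and `c_p(V(v))` that of the subtree without its root. A backward invariant sequence with value
`1` at the root is a unit current, and `∑ |f(v) μ_v|^p` is its energy.

Hölder's inequality at the children of a vertex says that a current splitting among parallel
resistors `r u` spends at least the energy of the equivalent single resistor; iterated down to a
finite depth, this bounds the energy below by the truncated continued fraction. Equality holds when
the current splits in proportion to the `r u ^ (-p*)`, with `r u = r_p(V(u))`, and this splitting
defines the extremal sequence. By strict convexity of `x ↦ |x|^p`, the midpoint of two distinct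
minimizers would have smaller energy, hence uniqueness.
-/

/-! ### Series and parallel connections of resistances -/

section SeriesParallel

variable {ι : Type*} {p q : ℝ}

/-- The resistance of order `p` of two resistors in series. -/
noncomputable def seriesResistance (p : ℝ) (x y : ℝ≥0∞) : ℝ≥0∞ := (x ^ p + y ^ p) ^ (1 / p)

/-- The resistance of a family `r` of resistors in parallel, where `q` is the exponent conjugate to
the order. The empty family has resistance `⊤`, whereas the continued fraction `c_p` of a leaf is
`0`. -/
noncomputable def parallelResistance (q : ℝ) (r : ι → ℝ≥0∞) : ℝ≥0∞ :=
  (∑' i, r i ^ (-q)) ^ (-(1 / q))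

/-- The fraction of the total current through a family `r` of resistors in parallel that passes
through the resistor `i`. -/
noncomputable def parallelFraction (q : ℝ) (r : ι → ℝ≥0∞) (i : ι) : ℝ≥0∞ :=
  r i ^ (-q) / ∑' j, r j ^ (-q)

theorem seriesResistance_rpow (hp : 0 < p) (x y : ℝ≥0∞) :
    seriesResistance p x y ^ p = x ^ p + y ^ p := by
  rw [seriesResistance, one_div, ENNReal.rpow_inv_rpow hp.ne']

theorem mul_seriesResistance_rpow (hp : 0 < p) (a x y : ℝ≥0∞) :
    (a * seriesResistance p x y) ^ p = (a * x) ^ p + (a * y) ^ p := by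
  simp only [ENNReal.mul_rpow_of_nonneg _ _ hp.le, seriesResistance_rpow hp, mul_add]

theorem seriesResistance_mono (hp : 0 < p) {x y y' : ℝ≥0∞} (h : y ≤ y') :
    seriesResistance p x y ≤ seriesResistance p x y' := by
  unfold seriesResistance
  gcongr

theorem le_seriesResistance_left (hp : 0 < p) (x y : ℝ≥0∞) : x ≤ seriesResistance p x y := by
  rw [← ENNReal.rpow_le_rpow_iff hp, seriesResistance_rpow hp]
  exact le_self_add

theorem continuous_seriesResistance_right (p : ℝ) (x : ℝ≥0∞) :
    Continuous (seriesResistance p x) :=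
  ENNReal.continuous_rpow_const.comp (continuous_const.add ENNReal.continuous_rpow_const)

theorem seriesResistance_ne_top_iff (hp : 0 < p) {x y : ℝ≥0∞} (hx : x ≠ ⊤) :
    seriesResistance p x y ≠ ⊤ ↔ y ≠ ⊤ := by
  have rpow_ne_top_iff (z : ℝ≥0∞) : z ^ p ≠ ⊤ ↔ z ≠ ⊤ := (ENNReal.rpow_eq_top_iff_of_pos hp).not
  rw [← rpow_ne_top_iff, seriesResistance_rpow hp, ENNReal.add_ne_top, rpow_ne_top_iff,
    rpow_ne_top_iff, and_iff_right hx]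

theorem seriesResistance_right_inj (hp : 0 < p) {x y y' : ℝ≥0∞} (hx : x ≠ ⊤) :
    seriesResistance p x y = seriesResistance p x y' ↔ y = y' := by
  rw [← (ENNReal.rpow_left_injective hp.ne').eq_iff, seriesResistance_rpow hp,
    seriesResistance_rpow hp, ENNReal.add_right_inj (ENNReal.rpow_ne_top_of_nonneg hp.le hx),
    (ENNReal.rpow_left_injective hp.ne').eq_iff]

theorem parallelResistance_mono (hq : 0 < q) {r s : ι → ℝ≥0∞} (h : ∀ i, r i ≤ s i) :
    parallelResistance q r ≤ parallelResistance q s := by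
  simp only [parallelResistance, ENNReal.rpow_neg]
  gcongr with i
  exact h i

theorem rpow_neg_ne_zero_iff (hq : 0 < q) {x : ℝ≥0∞} : x ^ (-q) ≠ 0 ↔ x ≠ ⊤ := by
  simp [ENNReal.rpow_neg, ENNReal.rpow_eq_top_iff_of_pos hq]

theorem ne_zero_of_tsum_rpow_neg_ne_top (hq : 0 < q) {r : ι → ℝ≥0∞}
    (h_fin : ∑' i, r i ^ (-q) ≠ ⊤) (i : ι) : r i ≠ 0 := by
  intro hi
  apply ENNReal.ne_top_of_tsum_ne_top h_fin i
  rw [hi, ENNReal.zero_rpow_of_neg (neg_neg_of_pos hq)]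

theorem tsum_rpow_neg_ne_zero_iff (hq : 0 < q) {r : ι → ℝ≥0∞} :
    ∑' i, r i ^ (-q) ≠ 0 ↔ ∃ i, r i ≠ ⊤ := by
  simp only [ne_eq, ENNReal.tsum_eq_zero, not_forall]
  exact exists_congr fun i => rpow_neg_ne_zero_iff hq

theorem parallelResistance_ne_top_iff (hq : 0 < q) {r : ι → ℝ≥0∞} :
    parallelResistance q r ≠ ⊤ ↔ ∃ i, r i ≠ ⊤ := by
  rw [← tsum_rpow_neg_ne_zero_iff hq, parallelResistance, ENNReal.rpow_neg, ne_eq,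
    ENNReal.inv_eq_top, ENNReal.rpow_eq_zero_iff_of_pos (one_div_pos.2 hq)]

theorem tendsto_tsum_of_dominated {f : ℕ → ι → ℝ≥0∞} {g bound : ι → ℝ≥0∞}
    (h_bound : ∀ m i, f m i ≤ bound i) (h_fin : ∑' i, bound i ≠ ⊤)
    (h_lim : ∀ i, Tendsto (fun m => f m i) atTop (𝓝 (g i))) :
    Tendsto (fun m => ∑' i, f m i) atTop (𝓝 (∑' i, g i)) := by
  let _ : MeasurableSpace ι := ⊤
  have h_meas (h : ι → ℝ≥0∞) : Measurable h := measurable_from_top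
  simp only [← MeasureTheory.lintegral_count' (h_meas _)] at h_fin ⊢
  exact MeasureTheory.tendsto_lintegral_of_dominated_convergence bound (fun m => h_meas _)
    (fun m => .of_forall (h_bound m)) h_fin (.of_forall h_lim)

theorem tendsto_parallelResistance (hq : 0 < q) {r : ℕ → ι → ℝ≥0∞} {s b : ι → ℝ≥0∞}
    (h_bound : ∀ m i, b i ≤ r m i) (h_fin : ∑' i, b i ^ (-q) ≠ ⊤)
    (h_lim : ∀ i, Tendsto (fun m => r m i) atTop (𝓝 (s i))) :
    Tendsto (fun m => parallelResistance q (r m)) atTop (𝓝 (parallelResistance q s)) := by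
  refine (ENNReal.continuous_rpow_const.tendsto _).comp
    (tendsto_tsum_of_dominated (fun m i => ?_) h_fin fun i =>
      (ENNReal.continuous_rpow_const.tendsto _).comp (h_lim i))
  simp only [ENNReal.rpow_neg]
  gcongr
  exact h_bound m i

theorem tsum_mul_le_Lp_mul_Lq (hpq : p.HolderConjugate q) (f g : ι → ℝ≥0∞) :
    ∑' i, f i * g i ≤ (∑' i, f i ^ p) ^ (1 / p) * (∑' i, g i ^ q) ^ (1 / q) := by
  let _ : MeasurableSpace ι := ⊤
  have h_meas (h : ι → ℝ≥0∞) : Measurable h := measurable_from_top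
  simpa only [MeasureTheory.lintegral_count' (h_meas _), Pi.mul_apply] using
    ENNReal.lintegral_mul_le_Lp_mul_Lq MeasureTheory.Measure.count hpq
      (h_meas f).aemeasurable (h_meas g).aemeasurable

/-- Hölder's inequality applied to `a i = (a i * r i) * (r i)⁻¹`. -/
theorem tsum_mul_parallelResistance_rpow_le (hpq : p.HolderConjugate q) (a r : ι → ℝ≥0∞) :
    ((∑' i, a i) * parallelResistance q r) ^ p ≤ ∑' i, (a i * r i) ^ p := by
  have hp := hpq.pos
  have hq := hpq.symm.pos
  by_cases h_fin : ∑' i, r i ^ (-q) = ⊤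
  · simp [parallelResistance, h_fin, hp, hq]
  by_cases h_energy : ∑' i, (a i * r i) ^ p = ⊤
  · simp [h_energy]
  have mul_cancel (i : ι) : a i * r i * (r i)⁻¹ = a i := by
    have hi : a i * r i ≠ ⊤ := mt (ENNReal.rpow_eq_top_iff_of_pos hp).2
      (ENNReal.ne_top_of_tsum_ne_top h_energy i)
    by_cases hr : r i = ⊤
    · have ha : a i = 0 := by
        by_contra ha
        exact hi (by rw [hr, ENNReal.mul_top ha])
      simp only [ha, zero_mul]
    · rw [mul_assoc, ENNReal.mul_inv_cancel (ne_zero_of_tsum_rpow_neg_ne_top hq h_fin i) hr,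
        mul_one]
  have holder := tsum_mul_le_Lp_mul_Lq hpq (fun i => a i * r i) fun i => (r i)⁻¹
  simp only [mul_cancel, ENNReal.inv_rpow, ← ENNReal.rpow_neg] at holder
  rw [← ENNReal.le_rpow_inv_iff hp, ← one_div]
  set energy := ∑' i, (a i * r i) ^ p
  set S := ∑' i, r i ^ (-q)
  calc (∑' i, a i) * S ^ (-(1 / q))
      ≤ energy ^ (1 / p) * S ^ (1 / q) * S ^ (-(1 / q)) := by gcongr
    _ = energy ^ (1 / p) * (S ^ (1 / q) * (S ^ (1 / q))⁻¹) := by rw [ENNReal.rpow_neg, mul_assoc]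
    _ ≤ energy ^ (1 / p) := mul_le_of_le_one_right' (ENNReal.mul_inv_le_one _)

theorem parallelFraction_le_one (r : ι → ℝ≥0∞) (i : ι) : parallelFraction q r i ≤ 1 :=
  ENNReal.div_le_of_le_mul (by simpa only [one_mul] using ENNReal.le_tsum i)

theorem parallelFraction_ne_zero_iff (hq : 0 < q) {r : ι → ℝ≥0∞}
    (h_fin : ∑' i, r i ^ (-q) ≠ ⊤) {i : ι} : parallelFraction q r i ≠ 0 ↔ r i ≠ ⊤ := by
  rw [parallelFraction, ENNReal.div_ne_zero, rpow_neg_ne_zero_iff hq, and_iff_left h_fin]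

theorem tsum_parallelFraction (hq : 0 < q) {r : ι → ℝ≥0∞} (h_fin : ∑' i, r i ^ (-q) ≠ ⊤)
    (hr : ∃ i, r i ≠ ⊤) : ∑' i, parallelFraction q r i = 1 := by
  simp only [parallelFraction, div_eq_mul_inv, ENNReal.tsum_mul_right]
  exact ENNReal.mul_inv_cancel ((tsum_rpow_neg_ne_zero_iff hq).2 hr) h_fin

/-- Equality holds in Hölder's inequality when the current splits proportionally to the
`r i ^ (-q)`. -/
theorem tsum_parallelFraction_mul_rpow (hpq : p.HolderConjugate q) {r : ι → ℝ≥0∞}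
    (h_fin : ∑' i, r i ^ (-q) ≠ ⊤) (hr : ∃ i, r i ≠ ⊤) :
    ∑' i, (parallelFraction q r i * r i) ^ p = parallelResistance q r ^ p := by
  have hp := hpq.pos
  have hq := hpq.symm.pos
  set S := ∑' i, r i ^ (-q) with hS
  have hS₀ : S ≠ 0 := (tsum_rpow_neg_ne_zero_iff hq).2 hr
  have fraction_mul_rpow (i : ι) :
      (parallelFraction q r i * r i) ^ p = r i ^ (-q) * S ^ (-p) := by
    by_cases hi : r i = ⊤
    · simp [parallelFraction, hi, hp, hq]
    calc (r i ^ (-q) / S * r i) ^ p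
        = (r i ^ (-q) * r i) ^ p * S ^ (-p) := by
          rw [div_eq_mul_inv, mul_right_comm, ENNReal.mul_rpow_of_nonneg _ _ hp.le,
            ENNReal.inv_rpow, ENNReal.rpow_neg S]
      _ = r i ^ ((-q + 1) * p) * S ^ (-p) := by
          have hi₀ : r i ≠ 0 := ne_zero_of_tsum_rpow_neg_ne_top hq h_fin i
          rw [ENNReal.rpow_mul, ENNReal.rpow_add _ _ hi₀ hi, ENNReal.rpow_one]
      _ = r i ^ (-q) * S ^ (-p) := by
          congr 2
          linear_combination -hpq.mul_eq_add
  calc ∑' i, (parallelFraction q r i * r i) ^ p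
      = S * S ^ (-p) := by simp only [fraction_mul_rpow, ENNReal.tsum_mul_right, ← hS]
    _ = S ^ (1 + -p) := by rw [ENNReal.rpow_add _ _ hS₀ h_fin, ENNReal.rpow_one]
    _ = S ^ (-(1 / q) * p) := by
        congr 1
        linear_combination hpq.div_conj_eq_sub_one
    _ = parallelResistance q r ^ p := ENNReal.rpow_mul _ _ _

end SeriesParallel

/-! ### The continued fraction as an electrical network -/

section ContinuedFraction

variable {chi : V → Set V} {w : V → ℝ≥0∞} {p : ℝ}

/-- The condition that the unweighted backward shift is defined on the weighted space
`ℓ^p(V, w)`. -/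
def BackwardShiftDefined (chi : V → Set V) (w : V → ℝ≥0∞) (p : ℝ) : Prop :=
  ∀ v : V, (∑' u : ↥(chi v), w u.1 ^ (-(conjExp p))) < ⊤

theorem holderConjugate_conjExp (hp : 1 < p) : p.HolderConjugate (conjExp p) :=
  Real.HolderConjugate.conjExponent hp

theorem cpAux_of_leaf {v : V} (hv : chi v = ∅) (m : ℕ) : cpAux chi w p m v = 0 := by
  cases m <;> simp [cpAux, hv]

theorem cpC_of_leaf {v : V} (hv : chi v = ∅) : cpC chi w p v = 0 := by
  simp [cpC, cpAux_of_leaf hv]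

theorem cpAux_succ {v : V} (hv : chi v ≠ ∅) (m : ℕ) :
    cpAux chi w p (m + 1) v = parallelResistance (conjExp p)
      fun u : ↥(chi v) => seriesResistance p (w u) (cpAux chi w p m u) := by
  simp only [cpAux, if_neg hv, parallelResistance, seriesResistance, ← ENNReal.rpow_mul]
  ring_nf

theorem rpC_eq_seriesResistance (v : V) :
    rpC chi w p v = seriesResistance p (w v) (cpC chi w p v) :=
  rfl

theorem monotone_cpAux (hp : 1 < p) (v : V) : Monotone fun m => cpAux chi w p m v := by
  refine monotone_nat_of_le_succ fun m => ?_
  induction m generalizing v with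
  | zero => exact zero_le
  | succ m ih =>
    by_cases hv : chi v = ∅
    · simp only [cpAux_of_leaf hv, le_refl]
    · rw [cpAux_succ hv, cpAux_succ hv]
      exact parallelResistance_mono (holderConjugate_conjExp hp).symm.pos fun u =>
        seriesResistance_mono (one_pos.trans hp) (ih u)

theorem tendsto_cpAux (hp : 1 < p) (v : V) :
    Tendsto (fun m => cpAux chi w p m v) atTop (𝓝 (cpC chi w p v)) :=
  tendsto_atTop_iSup (monotone_cpAux hp v)

theorem le_rpC (hp : 1 < p) (v : V) : w v ≤ rpC chi w p v :=
  le_seriesResistance_left (one_pos.trans hp) _ _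

theorem BackwardShiftDefined.tsum_rpC_ne_top (hdef : BackwardShiftDefined chi w p) (hp : 1 < p)
    (v : V) : ∑' u : ↥(chi v), rpC chi w p u ^ (-(conjExp p)) ≠ ⊤ := by
  have hq := (holderConjugate_conjExp hp).symm.pos
  refine ne_top_of_le_ne_top (hdef v).ne (ENNReal.tsum_le_tsum fun u => ?_)
  simp only [ENNReal.rpow_neg]
  gcongr
  exact le_rpC hp u.1

/-- Dominated convergence passes to the limit in the recursion for `cpAux`. -/
theorem BackwardShiftDefined.cpC_eq_parallelResistance (hdef : BackwardShiftDefined chi w p)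
    (hp : 1 < p) {v : V} (hv : chi v ≠ ∅) :
    cpC chi w p v = parallelResistance (conjExp p) fun u : ↥(chi v) => rpC chi w p u := by
  refine tendsto_nhds_unique ((tendsto_cpAux hp v).comp (tendsto_add_atTop_nat 1)) ?_
  simp only [Function.comp_def, cpAux_succ hv]
  exact tendsto_parallelResistance (holderConjugate_conjExp hp).symm.pos
    (fun m u => le_seriesResistance_left (one_pos.trans hp) _ _) (hdef v).ne
    fun u => ((continuous_seriesResistance_right p (w u)).tendsto _).comp (tendsto_cpAux hp u.1)

theorem rpC_ne_top_iff (hp : 1 < p) {v : V} (hwv : w v ≠ ⊤) :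
    rpC chi w p v ≠ ⊤ ↔ cpC chi w p v ≠ ⊤ :=
  seriesResistance_ne_top_iff (one_pos.trans hp) hwv

theorem BackwardShiftDefined.cpC_ne_top_iff (hdef : BackwardShiftDefined chi w p) (hp : 1 < p)
    {v : V} (hv : chi v ≠ ∅) :
    cpC chi w p v ≠ ⊤ ↔ ∃ u : ↥(chi v), rpC chi w p u ≠ ⊤ := by
  rw [hdef.cpC_eq_parallelResistance hp hv,
    parallelResistance_ne_top_iff (holderConjugate_conjExp hp).symm.pos]

end ContinuedFraction

/-! ### Generations of a rooted tree -/

section Generations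

variable {par : V → Option V}

theorem parIter_add (m n : ℕ) (v : V) :
    parIter par (m + n) v = (parIter par m v).bind (parIter par n) := by
  induction m generalizing v with
  | zero => rw [zero_add, parIter, Option.bind_some]
  | succ m ih => simp only [Nat.succ_add, parIter, Option.bind_assoc, ← ih]

theorem IsDirectedTree.eq_of_parIter_eq (hTree : IsDirectedTree par) {m n : ℕ} {u v : V}
    (hm : parIter par m u = some v) (hn : parIter par n u = some v) : m = n := by
  wlog hmn : m < n generalizing m n
  · by_contra hne
    exact hne (this hn hm (by lia)).symm
  obtain ⟨k, rfl⟩ := Nat.exists_eq_add_of_lt hmn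
  rw [add_assoc, parIter_add, hm, Option.bind_some] at hn
  exact (hTree.acyclic v (k + 1) k.succ_pos hn).elim

theorem IsDirectedTree.exists_parIter_eq_root (hTree : IsDirectedTree par) {root : V}
    (hroot : IsRoot par root) (v : V) : ∃ n, parIter par n v = some root := by
  obtain ⟨m, n, w, hm, hn⟩ := hTree.connected root v
  cases m with
  | zero => exact ⟨n, by rwa [Option.some.inj hm]⟩
  | succ m => simp [parIter, show par root = none from hroot] at hm

theorem IsDirectedTree.induction_from_root (hTree : IsDirectedTree par) {root : V}
    (hroot : IsRoot par root) {P : V → Prop} (base : P root)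
    (step : ∀ v, P v → ∀ u ∈ children par v, P u) (v : V) : P v := by
  obtain ⟨n, hn⟩ := hTree.exists_parIter_eq_root hroot v
  induction n generalizing v with
  | zero => rwa [Option.some.inj hn]
  | succ n ih =>
    obtain ⟨y, hy, hyn⟩ := Option.bind_eq_some_iff.1 hn
    exact step y (ih y hyn) v hy

/-- The `n`-th generation `Chi^n(v)` of descendants of `v`. -/
def iterChildren (par : V → Option V) (n : ℕ) (v : V) : Set V := {u | parIter par n u = some v}

theorem iterChildren_zero (v : V) : iterChildren par 0 v = {v} := by
  ext u
  simp [iterChildren, parIter]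

theorem iterChildren_succ (n : ℕ) (v : V) :
    iterChildren par (n + 1) v = ⋃ u ∈ children par v, iterChildren par n u := by
  have parIter_one : parIter par 1 = par := funext fun u => Option.bind_fun_some (par u)
  ext x
  simp [iterChildren, children, parIter_add n 1, parIter_one, Option.bind_eq_some_iff, and_comm]

theorem pairwiseDisjoint_iterChildren (n : ℕ) (s : Set V) :
    s.PairwiseDisjoint (iterChildren par n) :=
  fun _ _ _ _ huv => Set.disjoint_left.2 fun _ hu hv =>
    huv (Option.some.inj (hu.symm.trans hv))

theorem tsum_iterChildren_succ (h : V → ℝ≥0∞) (n : ℕ) (v : V) :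
    ∑' x : ↥(iterChildren par (n + 1) v), h x =
      ∑' u : ↥(children par v), ∑' x : ↥(iterChildren par n u.1), h x := by
  rw [iterChildren_succ, ENNReal.tsum_biUnion' (pairwiseDisjoint_iterChildren n _)]

/-- The sum of `h` over the proper descendants of `v` in the first `m` generations. -/
noncomputable def truncSum (par : V → Option V) (h : V → ℝ≥0∞) (m : ℕ) (v : V) : ℝ≥0∞ :=
  ∑ n ∈ Finset.range m, ∑' x : ↥(iterChildren par (n + 1) v), h x

theorem truncSum_zero (h : V → ℝ≥0∞) (v : V) : truncSum par h 0 v = 0 :=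
  Finset.sum_range_zero _

theorem truncSum_succ (h : V → ℝ≥0∞) (m : ℕ) (v : V) :
    truncSum par h (m + 1) v = ∑' u : ↥(children par v), (h u + truncSum par h m u) := by
  simp only [truncSum, tsum_iterChildren_succ h _ v]
  rw [← Summable.tsum_finsetSum fun _ _ => ENNReal.summable]
  refine tsum_congr fun u => ?_
  rw [Finset.sum_range_succ', iterChildren_zero, tsum_singleton u.1 h, add_comm]

theorem IsDirectedTree.iUnion_iterChildren_succ (hTree : IsDirectedTree par) {root : V}
    (hroot : IsRoot par root) : ⋃ n, iterChildren par (n + 1) root = {v | v ≠ root} := by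
  ext v
  rw [Set.mem_iUnion]
  constructor
  · rintro ⟨n, hn⟩ rfl
    exact hTree.acyclic v (n + 1) n.succ_pos hn
  · intro hv
    obtain ⟨n, hn⟩ := hTree.exists_parIter_eq_root hroot v
    cases n with
    | zero => exact (hv (Option.some.inj hn)).elim
    | succ n => exact ⟨n, hn⟩

theorem IsDirectedTree.tsum_ne_root_eq_iSup_truncSum (hTree : IsDirectedTree par) {root : V}
    (hroot : IsRoot par root) (h : V → ℝ≥0∞) :
    ∑' x : ↥{v : V | v ≠ root}, h x = ⨆ m, truncSum par h m root := by
  have disjoint : Set.univ.PairwiseDisjoint fun n => iterChildren par (n + 1) root :=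
    fun m _ n _ hmn => Set.disjoint_left.2 fun x hxm hxn =>
      hmn (Nat.succ_injective (hTree.eq_of_parIter_eq hxm hxn))
  rw [← hTree.iUnion_iterChildren_succ hroot, ENNReal.tsum_biUnion disjoint,
    ENNReal.tsum_eq_iSup_nat]
  rfl

/-- The number of the generation of `v`; meaningful only if `v` is a descendant of `root`. -/
noncomputable def depth (par : V → Option V) (root v : V) : ℕ :=
  sInf {n | parIter par n v = some root}

theorem IsDirectedTree.parIter_depth (hTree : IsDirectedTree par) {root : V}
    (hroot : IsRoot par root) (v : V) : parIter par (depth par root v) v = some root :=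
  Nat.sInf_mem (hTree.exists_parIter_eq_root hroot v)

theorem IsDirectedTree.depth_eq (hTree : IsDirectedTree par) {root v : V} {n : ℕ}
    (hn : parIter par n v = some root) : depth par root v = n :=
  hTree.eq_of_parIter_eq (Nat.sInf_mem (s := {n | parIter par n v = some root}) ⟨n, hn⟩) hn

theorem IsDirectedTree.depth_child (hTree : IsDirectedTree par) {root : V}
    (hroot : IsRoot par root) {u v : V} (hu : u ∈ children par v) :
    depth par root u = depth par root v + 1 := by
  apply hTree.depth_eq
  rw [parIter, show par u = some v from hu, Option.bind_some, hTree.parIter_depth hroot]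

end Generations

/-! ### The energy of a current -/

section Energy

variable {par : V → Option V} {w : V → ℝ≥0∞} {p : ℝ} {root : V}

theorem mul_cpAux_rpow_le_truncSum (hp : 1 < p) {a : V → ℝ≥0∞}
    (ha : ∀ v, children par v ≠ ∅ → a v ≤ ∑' u : ↥(children par v), a u) (m : ℕ) (v : V) :
    (a v * cpAux (children par) w p m v) ^ p ≤ truncSum par (fun u => (a u * w u) ^ p) m v := by
  have hp₀ := one_pos.trans hp
  induction m generalizing v with
  | zero => simp [cpAux, hp₀]
  | succ m ih =>
    by_cases hv : children par v = ∅
    · simp [cpAux_of_leaf hv, hp₀]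
    rw [cpAux_succ hv, truncSum_succ]
    calc _ ≤ ((∑' u : ↥(children par v), a u) * parallelResistance (conjExp p)
            fun u : ↥(children par v) =>
              seriesResistance p (w u) (cpAux (children par) w p m u)) ^ p := by
          gcongr
          exact ha v hv
      _ ≤ ∑' u : ↥(children par v),
            (a u * seriesResistance p (w u) (cpAux (children par) w p m u)) ^ p :=
          tsum_mul_parallelResistance_rpow_le (holderConjugate_conjExp hp) _ _
      _ ≤ _ := by
          refine ENNReal.tsum_le_tsum fun u => ?_
          rw [mul_seriesResistance_rpow hp₀]
          gcongr
          exact ih u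

theorem cpC_rpow_le_tsum (hTree : IsDirectedTree par) (hroot : IsRoot par root) (hp : 1 < p)
    {a : V → ℝ≥0∞} (ha : ∀ v, children par v ≠ ∅ → a v ≤ ∑' u : ↥(children par v), a u)
    (ha_root : a root = 1) :
    cpC (children par) w p root ^ p ≤ ∑' v : ↥{v : V | v ≠ root}, (a v * w v) ^ p := by
  rw [hTree.tsum_ne_root_eq_iSup_truncSum hroot fun v => (a v * w v) ^ p]
  refine le_of_tendsto ((ENNReal.continuous_rpow_const.tendsto _).comp (tendsto_cpAux hp root))
    (.of_forall fun m => le_iSup_of_le m ?_)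
  simpa only [Function.comp_apply, ha_root, one_mul] using
    mul_cpAux_rpow_le_truncSum (w := w) hp ha m root

/-- The fraction of the current through the parent of `v` that passes on to `v`, when the resistors
`r_p` of all siblings are connected in parallel; it is `1` at the root. -/
noncomputable def edgeFraction (par : V → Option V) (w : V → ℝ≥0∞) (p : ℝ) (v : V) : ℝ≥0∞ :=
  (par v).elim 1 fun y => rpC (children par) w p v ^ (-(conjExp p)) /
    ∑' u : ↥(children par y), rpC (children par) w p u ^ (-(conjExp p))

/-- The unit current entering at the root that minimizes the energy: the product of the fractions
along the path from the root. -/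
noncomputable def current (par : V → Option V) (w : V → ℝ≥0∞) (p : ℝ) (root : V) (v : V) : ℝ≥0∞ :=
  pathProd par (edgeFraction par w p) (depth par root v) v

theorem current_root (hTree : IsDirectedTree par) : current par w p root root = 1 := by
  rw [current, hTree.depth_eq (n := 0) rfl, pathProd]

theorem current_child (hTree : IsDirectedTree par) (hroot : IsRoot par root) {v : V}
    (u : ↥(children par v)) :
    current par w p root u = parallelFraction (conjExp p)
      (fun u : ↥(children par v) => rpC (children par) w p u) u * current par w p root v := by
  have hu : par u = some v := u.2
  rw [current, hTree.depth_child hroot u.2, pathProd, edgeFraction, hu]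
  rfl

theorem current_ne_top (hTree : IsDirectedTree par) (hroot : IsRoot par root) (v : V) :
    current par w p root v ≠ ⊤ := by
  refine hTree.induction_from_root hroot (P := fun v => current par w p root v ≠ ⊤)
    (by simp [current_root hTree]) (fun v hv u hu => ?_) v
  rw [current_child hTree hroot ⟨u, hu⟩]
  exact ENNReal.mul_ne_top
    (ne_top_of_le_ne_top ENNReal.one_ne_top (parallelFraction_le_one _ _)) hv

theorem current_ne_zero_iff (hTree : IsDirectedTree par) (hroot : IsRoot par root) (hp : 1 < p)
    (hw : ∀ v, w v ≠ ⊤) (hdef : BackwardShiftDefined (children par) w p)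
    (hfin : rpC (children par) w p root ≠ ⊤) (v : V) :
    current par w p root v ≠ 0 ↔ rpC (children par) w p v ≠ ⊤ := by
  refine hTree.induction_from_root hroot
    (P := fun v => current par w p root v ≠ 0 ↔ rpC (children par) w p v ≠ ⊤)
    (by simp [current_root hTree, hfin]) (fun v ih u hu => ?_) v
  have parent_ne_top : rpC (children par) w p u ≠ ⊤ → rpC (children par) w p v ≠ ⊤ := fun h =>
    (rpC_ne_top_iff hp (hw v)).2
      ((hdef.cpC_ne_top_iff hp (Set.nonempty_iff_ne_empty.1 ⟨u, hu⟩)).2 ⟨⟨u, hu⟩, h⟩)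
  rw [current_child hTree hroot ⟨u, hu⟩, mul_ne_zero_iff, ih,
    parallelFraction_ne_zero_iff (holderConjugate_conjExp hp).symm.pos
      (hdef.tsum_rpC_ne_top hp v)]
  exact and_iff_left_of_imp parent_ne_top

theorem exists_child_rpC_ne_top (hTree : IsDirectedTree par) (hroot : IsRoot par root)
    (hp : 1 < p) (hw : ∀ v, w v ≠ ⊤) (hdef : BackwardShiftDefined (children par) w p)
    (hfin : rpC (children par) w p root ≠ ⊤) {v : V} (hv : children par v ≠ ∅)
    (h : current par w p root v ≠ 0) :
    ∃ u : ↥(children par v), rpC (children par) w p u ≠ ⊤ :=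
  (hdef.cpC_ne_top_iff hp hv).1 <| (rpC_ne_top_iff hp (hw v)).1 <|
    (current_ne_zero_iff hTree hroot hp hw hdef hfin v).1 h

theorem tsum_current_children (hTree : IsDirectedTree par) (hroot : IsRoot par root)
    (hp : 1 < p) (hw : ∀ v, w v ≠ ⊤) (hdef : BackwardShiftDefined (children par) w p)
    (hfin : rpC (children par) w p root ≠ ⊤) {v : V} (hv : children par v ≠ ∅) :
    ∑' u : ↥(children par v), current par w p root u = current par w p root v := by
  simp only [current_child hTree hroot, ENNReal.tsum_mul_right]
  by_cases h : current par w p root v = 0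
  · simp only [h, mul_zero]
  · rw [tsum_parallelFraction (holderConjugate_conjExp hp).symm.pos (hdef.tsum_rpC_ne_top hp v)
      (exists_child_rpC_ne_top hTree hroot hp hw hdef hfin hv h), one_mul]

theorem tsum_current_mul_rpC_rpow (hTree : IsDirectedTree par) (hroot : IsRoot par root)
    (hp : 1 < p) (hw : ∀ v, w v ≠ ⊤) (hdef : BackwardShiftDefined (children par) w p)
    (hfin : rpC (children par) w p root ≠ ⊤) (v : V) :
    ∑' u : ↥(children par v), (current par w p root u * rpC (children par) w p u) ^ p =
      (current par w p root v * cpC (children par) w p v) ^ p := by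
  have hp₀ := one_pos.trans hp
  by_cases hv : children par v = ∅
  · have : IsEmpty ↥(children par v) := Set.isEmpty_coe_sort.2 hv
    simp [cpC_of_leaf hv, hp₀]
  simp only [current_child hTree hroot, mul_right_comm _ (current par w p root v),
    ENNReal.mul_rpow_of_nonneg _ _ hp₀.le, ENNReal.tsum_mul_right]
  by_cases h : current par w p root v = 0
  · simp [h, hp₀]
  simp only [← ENNReal.mul_rpow_of_nonneg _ _ hp₀.le]
  rw [tsum_parallelFraction_mul_rpow (holderConjugate_conjExp hp) (hdef.tsum_rpC_ne_top hp v)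
    (exists_child_rpC_ne_top hTree hroot hp hw hdef hfin hv h),
    ← hdef.cpC_eq_parallelResistance hp hv, ENNReal.mul_rpow_of_nonneg _ _ hp₀.le, mul_comm]

theorem truncSum_current_le (hTree : IsDirectedTree par) (hroot : IsRoot par root)
    (hp : 1 < p) (hw : ∀ v, w v ≠ ⊤) (hdef : BackwardShiftDefined (children par) w p)
    (hfin : rpC (children par) w p root ≠ ⊤) (m : ℕ) (v : V) :
    truncSum par (fun u => (current par w p root u * w u) ^ p) m v ≤
      (current par w p root v * cpC (children par) w p v) ^ p := by
  induction m generalizing v with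
  | zero => simp only [truncSum_zero, zero_le]
  | succ m ih =>
    rw [truncSum_succ, ← tsum_current_mul_rpC_rpow hTree hroot hp hw hdef hfin]
    refine ENNReal.tsum_le_tsum fun u => ?_
    rw [rpC_eq_seriesResistance, mul_seriesResistance_rpow (one_pos.trans hp)]
    gcongr
    exact ih u

theorem tsum_current_mul_rpow (hTree : IsDirectedTree par) (hroot : IsRoot par root)
    (hp : 1 < p) (hw : ∀ v, w v ≠ ⊤) (hdef : BackwardShiftDefined (children par) w p)
    (hfin : rpC (children par) w p root ≠ ⊤) :
    ∑' v : ↥{v : V | v ≠ root}, (current par w p root v * w v) ^ p =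
      cpC (children par) w p root ^ p := by
  apply le_antisymm
  · rw [hTree.tsum_ne_root_eq_iSup_truncSum hroot fun v => (current par w p root v * w v) ^ p]
    simpa only [iSup_le_iff, current_root hTree, one_mul] using
      fun m => truncSum_current_le hTree hroot hp hw hdef hfin m root
  · exact cpC_rpow_le_tsum hTree hroot hp
      (fun v hv => (tsum_current_children hTree hroot hp hw hdef hfin hv).ge) (current_root hTree)

end Energy

/-! ### Strict convexity of the energy -/

section StrictConvexity

theorem midpoint_apply {ι E : Type*} [AddCommGroup E] [Module ℝ E] (f g : ι → E) (i : ι) :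
    midpoint ℝ f g i = midpoint ℝ (f i) (g i) := by
  simp only [midpoint_eq_smul_add, Pi.smul_apply, Pi.add_apply]

theorem norm_midpoint_rpow_lt {E : Type*} [NormedAddCommGroup E] [NormedSpace ℝ E]
    [StrictConvexSpace ℝ E] {p : ℝ} (hp : 1 < p) {a b : E} (hab : a ≠ b) :
    ‖midpoint ℝ a b‖ ^ p < (‖a‖ ^ p + ‖b‖ ^ p) / 2 := by
  have hp₀ := one_pos.trans hp
  rw [midpoint_eq_smul_add, invOf_eq_inv, ← one_div]
  by_cases h_norm : ‖a‖ = ‖b‖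
  · rw [← h_norm, add_self_div_two]
    exact Real.rpow_lt_rpow (norm_nonneg _) ((norm_midpoint_lt_iff h_norm).2 hab) hp₀
  · calc ‖(1 / 2 : ℝ) • (a + b)‖ ^ p
        ≤ (1 / 2 * ‖a‖ + 1 / 2 * ‖b‖) ^ p := by
          rw [norm_smul, Real.norm_of_nonneg one_half_pos.le, ← mul_add]
          gcongr
          exact norm_add_le a b
      _ < 1 / 2 * ‖a‖ ^ p + 1 / 2 * ‖b‖ ^ p :=
          (strictConvexOn_rpow hp).2 (norm_nonneg a) (norm_nonneg b) h_norm one_half_pos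
            one_half_pos (add_halves 1)
      _ = (‖a‖ ^ p + ‖b‖ ^ p) / 2 := by ring

theorem enorm_midpoint_rpow_lt {E : Type*} [NormedAddCommGroup E] [NormedSpace ℝ E]
    [StrictConvexSpace ℝ E] {p : ℝ} (hp : 1 < p) {a b : E} (hab : a ≠ b) :
    ‖midpoint ℝ a b‖ₑ ^ p < (‖a‖ₑ ^ p + ‖b‖ₑ ^ p) / 2 := by
  have hp₀ := one_pos.trans hp
  have enorm_rpow (c : E) : ‖c‖ₑ ^ p = ENNReal.ofReal (‖c‖ ^ p) := by
    rw [← ofReal_norm, ENNReal.ofReal_rpow_of_nonneg (norm_nonneg c) hp₀.le]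
  rw [enorm_rpow, enorm_rpow, enorm_rpow, ← ENNReal.ofReal_add (by positivity) (by positivity),
    ← ENNReal.ofReal_ofNat 2, ← ENNReal.ofReal_div_of_pos two_pos]
  have h_lt := norm_midpoint_rpow_lt hp hab
  exact (ENNReal.ofReal_lt_ofReal_iff_of_nonneg (by positivity)).2 h_lt

variable {𝕜 : Type*} [RCLike 𝕜] {w : V → ℝ≥0∞} {p : ℝ}

theorem lpSumOn_rpow (hp : 0 < p) (S : Set V) (g : V → 𝕜) :
    lpSumOn w p S g ^ p = ∑' v : ↥S, (‖g v‖ₑ * w v) ^ p := by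
  rw [lpSumOn, one_div, ENNReal.rpow_inv_rpow hp.ne']
  rfl

theorem lpSumOn_midpoint_lt (hp : 1 < p) (hw₀ : ∀ v, w v ≠ 0) (hw : ∀ v, w v ≠ ⊤) {S : Set V}
    {f g : V → 𝕜} (hfg : ¬S.EqOn f g) (h_eq : lpSumOn w p S f = lpSumOn w p S g)
    (h_fin : lpSumOn w p S f ≠ ⊤) :
    lpSumOn w p S (midpoint ℝ f g) < lpSumOn w p S f := by
  have hp₀ := one_pos.trans hp
  obtain ⟨v, hvS, hv⟩ : ∃ v ∈ S, f v ≠ g v := by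
    simpa only [Set.EqOn, not_forall, exists_prop] using hfg
  have lt_at (u : V) (hu : f u ≠ g u) : (‖midpoint ℝ f g u‖ₑ * w u) ^ p <
      ((‖f u‖ₑ * w u) ^ p + (‖g u‖ₑ * w u) ^ p) / 2 := by
    simp only [ENNReal.mul_rpow_of_nonneg _ _ hp₀.le, ← add_mul, ENNReal.mul_div_right_comm]
    exact ENNReal.mul_lt_mul_left
      ((ENNReal.rpow_pos (hw₀ u).bot_lt (hw u)).ne') (ENNReal.rpow_ne_top_of_nonneg hp₀.le (hw u))
      (enorm_midpoint_rpow_lt hp hu)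
  have le_at (u : V) : (‖midpoint ℝ f g u‖ₑ * w u) ^ p ≤
      ((‖f u‖ₑ * w u) ^ p + (‖g u‖ₑ * w u) ^ p) / 2 := by
    by_cases hu : f u = g u
    · rw [midpoint_apply, hu, midpoint_self, ENNReal.add_div, ENNReal.add_halves]
    · exact (lt_at u hu).le
  have average : ∑' u : ↥S, ((‖f u‖ₑ * w u) ^ p + (‖g u‖ₑ * w u) ^ p) / 2 =
      lpSumOn w p S f ^ p := by
    simp only [div_eq_mul_inv, ENNReal.tsum_mul_right, ENNReal.tsum_add, ← lpSumOn_rpow hp₀,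
      ← h_eq]
    rw [← div_eq_mul_inv, ENNReal.add_div, ENNReal.add_halves]
  rw [← ENNReal.rpow_lt_rpow_iff hp₀, ← average, lpSumOn_rpow hp₀]
  refine ENNReal.tsum_lt_tsum (i := ⟨v, hvS⟩) ?_ (fun u => le_at u) (lt_at v hv)
  refine ne_top_of_le_ne_top ?_ (ENNReal.tsum_le_tsum fun u => le_at u)
  exact average.trans_ne (ENNReal.rpow_ne_top_of_nonneg hp₀.le h_fin)

end StrictConvexity

/-! ### Backward invariant sequences and the extremal one -/

section Extremal

theorem biInf_eq_of_attained {α β : Type*} [CompleteLattice β] {S : Set α} {F : α → β} {c : β}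
    (h_le : ∀ g ∈ S, c ≤ F g) (h_attained : c ≠ ⊤ → ∃ g ∈ S, F g = c) : ⨅ g ∈ S, F g = c := by
  refine le_antisymm ?_ (le_iInf₂ h_le)
  by_cases hc : c = ⊤
  · exact hc.symm ▸ le_top
  · obtain ⟨g, hgS, hg⟩ := h_attained hc
    exact hg ▸ iInf₂_le g hgS

variable {𝕜 : Type*} [RCLike 𝕜] {chi : V → Set V} {par : V → Option V} {w : V → ℝ≥0∞} {p : ℝ}
  {root : V}

/-- The set `𝒥` of backward invariant sequences with value `1` at the root. -/
def unitInvariants (𝕜 : Type*) [RCLike 𝕜] (chi : V → Set V) (root : V) : Set (V → 𝕜) :=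
  {g | BackwardInv chi g ∧ g root = 1}

theorem midpoint_mem_unitInvariants {f g : V → 𝕜} (hf : f ∈ unitInvariants 𝕜 chi root)
    (hg : g ∈ unitInvariants 𝕜 chi root) : midpoint ℝ f g ∈ unitInvariants 𝕜 chi root := by
  refine ⟨fun v hv => ?_, by rw [midpoint_apply, hf.2, hg.2, midpoint_self]⟩
  simpa only [midpoint_apply, midpoint_eq_smul_add] using
    ((hf.1 v hv).add (hg.1 v hv)).const_smul (⅟2 : ℝ)

theorem BackwardInv.enorm_le_tsum {g : V → 𝕜} (hg : BackwardInv chi g) {v : V} (hv : chi v ≠ ∅) :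
    ‖g v‖ₑ ≤ ∑' u : ↥(chi v), ‖g u‖ₑ := by
  rw [← (hg v hv).tsum_eq]
  exact enorm_tsum_le_tsum_enorm

theorem lpSumOn_univ_eq_seriesResistance (hp : 0 < p) {g : V → 𝕜} (hg : g root = 1) :
    lpSumOn w p Set.univ g = seriesResistance p (w root) (lpSumOn w p {v | v ≠ root} g) := by
  apply ENNReal.rpow_left_injective hp.ne'
  simp only [seriesResistance_rpow hp, lpSumOn_rpow hp]
  rw [tsum_univ fun v => (‖g v‖ₑ * w v) ^ p,
    ← ENNReal.summable.tsum_add_tsum_compl (s := {root}) ENNReal.summable,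
    tsum_singleton root fun v => (‖g v‖ₑ * w v) ^ p, hg, enorm_one, one_mul]
  rfl

theorem cpC_le_lpSumOn (hTree : IsDirectedTree par) (hroot : IsRoot par root) (hp : 1 < p)
    {g : V → 𝕜} (hg : g ∈ unitInvariants 𝕜 (children par) root) :
    cpC (children par) w p root ≤ lpSumOn w p {v | v ≠ root} g := by
  have hp₀ := one_pos.trans hp
  rw [← ENNReal.rpow_le_rpow_iff hp₀, lpSumOn_rpow hp₀]
  exact cpC_rpow_le_tsum hTree hroot hp (fun v hv => hg.1.enorm_le_tsum hv)
    (by rw [hg.2, enorm_one])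

theorem rpC_le_lpSumOn (hTree : IsDirectedTree par) (hroot : IsRoot par root) (hp : 1 < p)
    {g : V → 𝕜} (hg : g ∈ unitInvariants 𝕜 (children par) root) :
    rpC (children par) w p root ≤ lpSumOn w p Set.univ g := by
  rw [lpSumOn_univ_eq_seriesResistance (one_pos.trans hp) hg.2]
  exact seriesResistance_mono (one_pos.trans hp) (cpC_le_lpSumOn hTree hroot hp hg)

theorem lpSumOn_univ_eq_rpC_iff (hp : 0 < p) (hwr : w root ≠ ⊤) {g : V → 𝕜} (hg : g root = 1) :
    lpSumOn w p Set.univ g = rpC chi w p root ↔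
      lpSumOn w p {v | v ≠ root} g = cpC chi w p root := by
  rw [lpSumOn_univ_eq_seriesResistance hp hg, rpC_eq_seriesResistance,
    seriesResistance_right_inj hp hwr]

theorem eq_of_lpSumOn_eq_cpC (hTree : IsDirectedTree par) (hroot : IsRoot par root)
    (hp : 1 < p) (hw₀ : ∀ v, w v ≠ 0) (hw : ∀ v, w v ≠ ⊤)
    (hfin : cpC (children par) w p root ≠ ⊤) {f g : V → 𝕜}
    (hf : f ∈ unitInvariants 𝕜 (children par) root)
    (hg : g ∈ unitInvariants 𝕜 (children par) root)
    (hf_eq : lpSumOn w p {v | v ≠ root} f = cpC (children par) w p root)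
    (hg_eq : lpSumOn w p {v | v ≠ root} g = cpC (children par) w p root) : f = g := by
  have eqOn_ne_root : Set.EqOn f g {v | v ≠ root} := by
    by_contra hfg
    have h_lt := lpSumOn_midpoint_lt hp hw₀ hw hfg (hf_eq.trans hg_eq.symm) (hf_eq.trans_ne hfin)
    have h_ge := cpC_le_lpSumOn (w := w) hTree hroot hp (midpoint_mem_unitInvariants hf hg)
    exact (h_lt.trans_le (hf_eq.trans_le h_ge)).false
  funext v
  by_cases hv : v = root
  · rw [hv, hf.2, hg.2]
  · exact eqOn_ne_root hv

/-- The minimizer of the energy among the backward invariant sequences with value `1` at the root: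
the current `current`, viewed as a scalar sequence. -/
noncomputable def extremal (𝕜 : Type*) [RCLike 𝕜] (par : V → Option V) (w : V → ℝ≥0∞) (p : ℝ)
    (root : V) (v : V) : 𝕜 :=
  ((current par w p root v).toReal : 𝕜)

theorem enorm_extremal (hTree : IsDirectedTree par) (hroot : IsRoot par root) (v : V) :
    ‖extremal 𝕜 par w p root v‖ₑ = current par w p root v := by
  rw [extremal, ← ofReal_norm, RCLike.norm_ofReal, abs_of_nonneg ENNReal.toReal_nonneg,
    ENNReal.ofReal_toReal (current_ne_top hTree hroot v)]

theorem extremal_child (hTree : IsDirectedTree par) (hroot : IsRoot par root) {v : V}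
    (u : ↥(children par v)) :
    extremal 𝕜 par w p root u = ((parallelFraction (conjExp p)
      (fun u : ↥(children par v) => rpC (children par) w p u) u).toReal : 𝕜) *
        extremal 𝕜 par w p root v := by
  rw [extremal, current_child hTree hroot, ENNReal.toReal_mul, RCLike.ofReal_mul, extremal]

theorem extremal_eq_zero (hTree : IsDirectedTree par) (hroot : IsRoot par root) (hp : 1 < p)
    (hw : ∀ v, w v ≠ ⊤) (hdef : BackwardShiftDefined (children par) w p)
    (hfin : rpC (children par) w p root ≠ ⊤) {v : V} (hv : rpC (children par) w p v = ⊤) :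
    extremal 𝕜 par w p root v = 0 := by
  have h_zero : current par w p root v = 0 :=
    not_not.1 fun h => (current_ne_zero_iff hTree hroot hp hw hdef hfin v).1 h hv
  rw [extremal, h_zero, ENNReal.toReal_zero, RCLike.ofReal_zero]

theorem isPosScalar_extremal (hTree : IsDirectedTree par) (hroot : IsRoot par root) (hp : 1 < p)
    (hw : ∀ v, w v ≠ ⊤) (hdef : BackwardShiftDefined (children par) w p)
    (hfin : rpC (children par) w p root ≠ ⊤) {v : V} (hv : rpC (children par) w p v ≠ ⊤) :
    IsPosScalar (extremal 𝕜 par w p root v) :=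
  ⟨_, ENNReal.toReal_pos ((current_ne_zero_iff hTree hroot hp hw hdef hfin v).2 hv)
    (current_ne_top hTree hroot v), rfl⟩

theorem extremal_mem_unitInvariants (hTree : IsDirectedTree par) (hroot : IsRoot par root)
    (hp : 1 < p) (hw : ∀ v, w v ≠ ⊤) (hdef : BackwardShiftDefined (children par) w p)
    (hfin : rpC (children par) w p root ≠ ⊤) :
    extremal 𝕜 par w p root ∈ unitInvariants 𝕜 (children par) root := by
  constructor
  · intro v hv
    have h_sum := tsum_current_children hTree hroot hp hw hdef hfin hv
    have h_real := ENNReal.hasSum_toReal (h_sum.trans_ne (current_ne_top hTree hroot v))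
    rw [← ENNReal.tsum_toReal_eq fun u : ↥(children par v) => current_ne_top hTree hroot u.1,
      h_sum] at h_real
    exact (RCLike.hasSum_ofReal 𝕜).2 h_real
  · rw [extremal, current_root hTree, ENNReal.toReal_one, RCLike.ofReal_one]

theorem lpSumOn_ne_root_extremal (hTree : IsDirectedTree par) (hroot : IsRoot par root)
    (hp : 1 < p) (hw : ∀ v, w v ≠ ⊤) (hdef : BackwardShiftDefined (children par) w p)
    (hfin : rpC (children par) w p root ≠ ⊤) :
    lpSumOn w p {v | v ≠ root} (extremal 𝕜 par w p root) = cpC (children par) w p root := by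
  have hp₀ := one_pos.trans hp
  apply ENNReal.rpow_left_injective hp₀.ne'
  simp only [lpSumOn_rpow hp₀, enorm_extremal hTree hroot]
  exact tsum_current_mul_rpow hTree hroot hp hw hdef hfin

theorem lpSumOn_univ_extremal (hTree : IsDirectedTree par) (hroot : IsRoot par root)
    (hp : 1 < p) (hw : ∀ v, w v ≠ ⊤) (hdef : BackwardShiftDefined (children par) w p)
    (hfin : rpC (children par) w p root ≠ ⊤) :
    lpSumOn w p Set.univ (extremal 𝕜 par w p root) = rpC (children par) w p root :=
  (lpSumOn_univ_eq_rpC_iff (one_pos.trans hp) (hw root)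
    (extremal_mem_unitInvariants hTree hroot hp hw hdef hfin).2).2
    (lpSumOn_ne_root_extremal hTree hroot hp hw hdef hfin)

theorem iInf_lpSumOn_univ (hTree : IsDirectedTree par) (hroot : IsRoot par root) (hp : 1 < p)
    (hw : ∀ v, w v ≠ ⊤) (hdef : BackwardShiftDefined (children par) w p) :
    ⨅ g ∈ unitInvariants 𝕜 (children par) root, lpSumOn w p Set.univ g =
      rpC (children par) w p root :=
  biInf_eq_of_attained (fun _ hg => rpC_le_lpSumOn hTree hroot hp hg) fun hfin =>
    ⟨extremal 𝕜 par w p root, extremal_mem_unitInvariants hTree hroot hp hw hdef hfin,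
      lpSumOn_univ_extremal hTree hroot hp hw hdef hfin⟩

theorem iInf_lpSumOn_ne_root (hTree : IsDirectedTree par) (hroot : IsRoot par root) (hp : 1 < p)
    (hw : ∀ v, w v ≠ ⊤) (hdef : BackwardShiftDefined (children par) w p) :
    ⨅ g ∈ unitInvariants 𝕜 (children par) root, lpSumOn w p {v | v ≠ root} g =
      cpC (children par) w p root := by
  refine biInf_eq_of_attained (fun _ hg => cpC_le_lpSumOn hTree hroot hp hg) fun h_cpC => ?_
  have hfin := (rpC_ne_top_iff hp (hw root)).2 h_cpC
  exact ⟨extremal 𝕜 par w p root, extremal_mem_unitInvariants hTree hroot hp hw hdef hfin,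
    lpSumOn_ne_root_extremal hTree hroot hp hw hdef hfin⟩

end Extremal

/-- Theorem 6.6 / `t-charpinv`: on an arbitrary rooted tree, if the
unweighted backward shift is defined on `ℓ^p(V,μ)` (`1 < p < ∞`), the infimum of the
norm over backward invariant sequences with value `1` at the root equals `r_p` (resp.
`c_p` omitting the root), and when finite it is attained by a unique sequence, given by
the explicit formula (stated in its equivalent recursive form). -/
theorem statement7
    {𝕜 : Type*} [RCLike 𝕜] {V : Type*} (par : V → Option V) (hTree : IsDirectedTree par)
    (root : V) (hroot : IsRoot par root) (μ : V → 𝕜) (hμ : ∀ v : V, μ v ≠ 0)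
    (p : ℝ) (hp : 1 < p)
    (hdef : ∀ v : V, (∑' u : ↥(children par v), nw μ u.1 ^ (-(conjExp p))) < ⊤) :
    -- (a)
    ((⨅ g ∈ {g : V → 𝕜 | BackwardInv (children par) g ∧ g root = 1},
        lpSumOn (nw μ) p Set.univ g) = rpC (children par) (nw μ) p root ∧
      (⨅ g ∈ {g : V → 𝕜 | BackwardInv (children par) g ∧ g root = 1},
        lpSumOn (nw μ) p {v : V | v ≠ root} g) = cpC (children par) (nw μ) p root) ∧
    -- (b)
    (rpC (children par) (nw μ) p root < ⊤ →
      ∃ f : V → 𝕜,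
        (BackwardInv (children par) f ∧ f root = 1 ∧
          lpSumOn (nw μ) p Set.univ f = rpC (children par) (nw μ) p root ∧
          lpSumOn (nw μ) p {v : V | v ≠ root} f = cpC (children par) (nw μ) p root ∧
          (∀ v w : V, par v = some w →
            (rpC (children par) (nw μ) p v = ⊤ → f v = 0) ∧
            (rpC (children par) (nw μ) p v < ⊤ →
              f v = (((rpC (children par) (nw μ) p v ^ (-(conjExp p)) /
                    ∑' u : ↥(children par w),
                      rpC (children par) (nw μ) p u.1 ^ (-(conjExp p))).toReal : 𝕜)) * f w)) ∧
          ∀ v : V, rpC (children par) (nw μ) p v < ⊤ → ∃ r : ℝ, 0 < r ∧ f v = (r : 𝕜)) ∧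
        ∀ g : V → 𝕜, BackwardInv (children par) g → g root = 1 →
          (lpSumOn (nw μ) p Set.univ g = rpC (children par) (nw μ) p root ∨
            lpSumOn (nw μ) p {v : V | v ≠ root} g = cpC (children par) (nw μ) p root) →
          g = f) := by
  have hw (v : V) : nw μ v ≠ ⊤ := ENNReal.coe_ne_top
  have hw₀ (v : V) : nw μ v ≠ 0 := enorm_ne_zero.2 (hμ v)
  refine ⟨⟨iInf_lpSumOn_univ hTree hroot hp hw hdef, iInf_lpSumOn_ne_root hTree hroot hp hw hdef⟩,
    fun h_lt_top => ?_⟩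
  have hfin := h_lt_top.ne
  have h_mem := extremal_mem_unitInvariants (𝕜 := 𝕜) hTree hroot hp hw hdef hfin
  have h_cpC := lpSumOn_ne_root_extremal (𝕜 := 𝕜) hTree hroot hp hw hdef hfin
  have h_rpC := lpSumOn_univ_extremal (𝕜 := 𝕜) hTree hroot hp hw hdef hfin
  refine ⟨extremal 𝕜 par (nw μ) p root, ⟨h_mem.1, h_mem.2, h_rpC, h_cpC, fun v y hv => ⟨?_, ?_⟩,
    fun v hv => isPosScalar_extremal hTree hroot hp hw hdef hfin hv.ne⟩,
    fun g hg hg_root h_min => ?_⟩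
  · exact extremal_eq_zero hTree hroot hp hw hdef hfin
  · exact fun _ => extremal_child hTree hroot ⟨v, hv⟩
  · have hg_cpC := h_min.elim (lpSumOn_univ_eq_rpC_iff (one_pos.trans hp) (hw root) hg_root).1 id
    exact eq_of_lpSumOn_eq_cpC hTree hroot hp hw₀ hw ((rpC_ne_top_iff hp (hw root)).1 hfin)
      ⟨hg, hg_root⟩ h_mem hg_cpC h_cpC

end PaperTree
end
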